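/- arXiv:1603.04344 — 2 statements merged into one kernel-verified Lean document; each statement's English description precedes it below -/
import Mathlib

section
/- Let condition B hold, let v_ε be positive numbers with v_ε → ∞ as ε → 0, and suppose condition D₁ holds. Then, for any family of initial distributions q̄_ε, the processes κ_ε(t) converge in finite-dimensional distributions to a nonnegative Lévy process θ₀(t) with E e^{−sθ₀(t)} = e^{−tA(s)}: for any 0 = t₀ ≤ t₁ ≤ … ≤ t_n < ∞ and s₁, …, s_n ≥ 0, E exp{−Σ_{r=1}^n s_r (κ_ε(t_r) − κ_ε(t_{r−1}))} → exp{−Σ_{r=1}^n A(s_r)(t_r − t_{r−1})} as ε → 0. -/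
open MeasureTheory Filter Set
open scoped Topology ENNReal

noncomputable section

/-- Condition B: there exists a ring chain of states `c 0, c 1, …, c N = c 0`
containing all states of the phase space, with
`liminf_{ε→0+} p ε (c (k-1)) (c k) > 0` for `k = 1, …, N`. -/
def CondB {m : ℕ} (p : ℝ → Fin m → Fin m → ℝ) : Prop :=
  ∃ N : ℕ, 0 < N ∧ ∃ c : ℕ → Fin m, c N = c 0 ∧
    (∀ i : Fin m, ∃ k ≤ N, c k = i) ∧
    ∀ k < N, 0 < Filter.liminf (fun ε => p ε (c k) (c (k + 1))) (𝓝[>] (0 : ℝ))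

/-- `π` is a stationary distribution of the transition matrix `p`. -/
def IsStationaryDist {m : ℕ} (p : Fin m → Fin m → ℝ) (π : Fin m → ℝ) : Prop :=
  (∀ i, 0 ≤ π i) ∧ (∑ i, π i = 1) ∧ ∀ j, π j = ∑ i, π i * p i j

/-- The step-sum reward process `κ_ε(t) = Σ_{n=1}^{[t v_ε]} κ_{ε,n}`. -/
def stepSum {Ω : Type} (κ : ℝ → ℕ → Ω → ℝ) (v : ℝ → ℝ) (ε t : ℝ) (ω : Ω) : ℝ :=
  ∑ n ∈ Finset.Icc 1 (Nat.floor (t * v ε)), κ ε n ω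

/-!
Started from a state `i`, the Laplace transform of `∑ k < N, a k * κ (k + 1)` is the `i`-th entry of
the product of the substochastic matrices of transition Laplace transforms at `a 0, …, a (N - 1)`,
applied to the constant vector `1`, so everything reduces to powers of a matrix `M` close to the
stochastic matrix `p` of the embedded chain. Put `d = 1 - M *ᵥ 1` and `b = π ⬝ᵥ d`. The edges of the
ring chain have probabilities bounded below, which makes `d` of the order of `b`, by stationarity of
`π`, and makes the Poisson equation `g - p *ᵥ g = b • 1 - d` solvable with `g` of the order of `d`,
by the maximum principle. Then `M` maps `1 + g` to `exp (-b) • (1 + g)` up to `O(‖d‖ ^ 2)`; after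
`O(v)` steps, where `v * b` tends to `A s`, the accumulated error `v * ‖d‖ ^ 2` still vanishes, and
so does the dependence on the starting state. Consecutive blocks of steps therefore contribute
independent factors `exp (-A (s r) * (t (r + 1) - t r))`.
-/

section UniformErgodicity

open Matrix Relation

variable {X : Type*} [Fintype X]

lemma abs_dotProduct_le_norm {q : X → ℝ} (hq : q ∈ stdSimplex ℝ X) (w : X → ℝ) :
    |q ⬝ᵥ w| ≤ ‖w‖ :=
  calc |q ⬝ᵥ w| ≤ ∑ i, |q i * w i| := Finset.abs_sum_le_sum_abs _ _
    _ ≤ ∑ i, q i * ‖w‖ := Finset.sum_le_sum fun i _ => by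
        rw [abs_mul, abs_of_nonneg (hq.1 i)]
        exact mul_le_mul_of_nonneg_left (norm_le_pi_norm w i) (hq.1 i)
    _ = ‖w‖ := by rw [← Finset.sum_mul, hq.2, one_mul]

variable [DecidableEq X]

/-- The stochastic matrices all of whose transitions along the edges of the directed graph `E` have
probability at least `δ`; the ergodicity constants below are uniform over this set. -/
def stochasticWithEdges (E : X → X → Prop) (δ : ℝ) : Set (Matrix X X ℝ) :=
  {p | p ∈ rowStochastic ℝ X ∧ ∀ i j, E i j → δ ≤ p i j}

variable {E : X → X → Prop} {δ : ℝ}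

lemma exists_stationary_le_mul_of_reflTransGen (hδ : 0 < δ) {x y : X} (h : ReflTransGen E x y) :
    ∃ K : ℝ, ∀ p ∈ stochasticWithEdges E δ, ∀ π, 0 ≤ π → π ᵥ* p = π → π x ≤ K * π y := by
  induction h with
  | refl => exact ⟨1, fun _ _ _ _ _ => (one_mul _).ge⟩
  | @tail y z _ hyz ih =>
    obtain ⟨K, hK⟩ := ih
    refine ⟨|K| / δ, fun p hp π hπ hstat => ?_⟩
    have hflow : π y * δ ≤ π z :=
      calc π y * δ ≤ π y * p y z := mul_le_mul_of_nonneg_left (hp.2 _ _ hyz) (hπ y)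
        _ ≤ (π ᵥ* p) z := Finset.single_le_sum (f := fun i => π i * p i z)
            (fun i _ => mul_nonneg (hπ i) (nonneg_of_mem_rowStochastic hp.1)) (Finset.mem_univ y)
        _ = π z := congrFun hstat z
    calc π x ≤ K * π y := hK p hp π hπ hstat
      _ ≤ |K| * π y := mul_le_mul_of_nonneg_right (le_abs_self K) (hπ y)
      _ = |K| / δ * (π y * δ) := by field_simp
      _ ≤ |K| / δ * π z := mul_le_mul_of_nonneg_left hflow (by positivity)

lemma exists_one_le_mul_stationary (hδ : 0 < δ) (hE : ∀ x y, ReflTransGen E x y) :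
    ∃ K : ℝ, ∀ p ∈ stochasticWithEdges E δ, ∀ π ∈ stdSimplex ℝ X, π ᵥ* p = π →
      ∀ y, 1 ≤ K * π y := by
  choose K hK using fun x y => exists_stationary_le_mul_of_reflTransGen hδ (hE x y)
  obtain ⟨L, hL⟩ := Finite.exists_le fun y => ∑ x, K x y
  refine ⟨L, fun p hp π hπ hstat y => ?_⟩
  calc 1 = ∑ x, π x := hπ.2.symm
    _ ≤ ∑ x, K x y * π y := Finset.sum_le_sum fun x _ => hK x y p hp π hπ.1 hstat
    _ = (∑ x, K x y) * π y := (Finset.sum_mul ..).symm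
    _ ≤ L * π y := mul_le_mul_of_nonneg_right (hL y) (hπ.1 y)

/-- Maximum principle: along an edge out of a point where `g` is within `C * ‖g - p *ᵥ g‖` of its
maximum, the gap to the maximum grows by at most a factor depending on `δ`. -/
lemma exists_sub_le_mul_norm_sub_mulVec_of_reflTransGen (hδ : 0 < δ) {x y : X}
    (h : ReflTransGen E x y) :
    ∃ C : ℝ, ∀ p ∈ stochasticWithEdges E δ, ∀ g : X → ℝ, (∀ i, g i ≤ g x) →
      g x - g y ≤ C * ‖g - p *ᵥ g‖ := by
  induction h with
  | refl => exact ⟨0, fun _ _ _ _ => by simp⟩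
  | @tail y z _ hyz ih =>
    obtain ⟨C, hC⟩ := ih
    refine ⟨(C + 1) / δ, fun p hp g hmax => ?_⟩
    have hmean : ∑ j, p y j * (g x - g j) = g x - (p *ᵥ g) y := by
      simp only [mul_sub, Finset.sum_sub_distrib, ← Finset.sum_mul,
        sum_row_of_mem_rowStochastic hp.1, one_mul, mulVec, dotProduct]
    have hdefect : g y - (p *ᵥ g) y ≤ ‖g - p *ᵥ g‖ :=
      (le_abs_self _).trans (norm_le_pi_norm (g - p *ᵥ g) y)
    rw [div_mul_eq_mul_div, le_div_iff₀' hδ]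
    calc δ * (g x - g z) ≤ p y z * (g x - g z) :=
          mul_le_mul_of_nonneg_right (hp.2 _ _ hyz) (sub_nonneg.2 (hmax z))
      _ ≤ ∑ j, p y j * (g x - g j) := Finset.single_le_sum (f := fun j => p y j * (g x - g j))
          (fun j _ => mul_nonneg (nonneg_of_mem_rowStochastic hp.1) (sub_nonneg.2 (hmax j)))
          (Finset.mem_univ z)
      _ = (g x - g y) + (g y - (p *ᵥ g) y) := by rw [hmean]; ring
      _ ≤ C * ‖g - p *ᵥ g‖ + ‖g - p *ᵥ g‖ := add_le_add (hC p hp g hmax) hdefect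
      _ = (C + 1) * ‖g - p *ᵥ g‖ := by ring

lemma exists_sub_le_mul_norm_sub_mulVec [Nonempty X] (hδ : 0 < δ)
    (hE : ∀ x y, ReflTransGen E x y) :
    ∃ C : ℝ, 0 ≤ C ∧ ∀ p ∈ stochasticWithEdges E δ, ∀ (g : X → ℝ) (i j : X),
      g i - g j ≤ C * ‖g - p *ᵥ g‖ := by
  choose C hC using fun x y => exists_sub_le_mul_norm_sub_mulVec_of_reflTransGen hδ (hE x y)
  obtain ⟨L, hL⟩ := Finite.exists_le fun z : X × X => C z.1 z.2
  refine ⟨max L 0, le_max_right L 0, fun p hp g i j => ?_⟩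
  obtain ⟨x, hx⟩ := Finite.exists_max g
  calc g i - g j ≤ g x - g j := sub_le_sub_right (hx i) _
    _ ≤ C x j * ‖g - p *ᵥ g‖ := hC x j p hp g hx
    _ ≤ max L 0 * ‖g - p *ᵥ g‖ :=
        mul_le_mul_of_nonneg_right ((hL (x, j)).trans (le_max_left L 0)) (norm_nonneg _)

end UniformErgodicity

section Poisson

open Matrix

variable {X : Type*} [Fintype X] {p : Matrix X X ℝ} {π : X → ℝ} {C : ℝ}

lemma dotProduct_sub_mulVec_of_vecMul_eq (hstat : π ᵥ* p = π) (g : X → ℝ) :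
    π ⬝ᵥ (g - p *ᵥ g) = 0 := by
  rw [dotProduct_sub, dotProduct_mulVec, hstat, sub_self]

lemma norm_le_mul_norm_sub_mulVec (hπ : π ∈ stdSimplex ℝ X)
    (hosc : ∀ (g : X → ℝ) (i j : X), g i - g j ≤ C * ‖g - p *ᵥ g‖) {g : X → ℝ}
    (hg : π ⬝ᵥ g = 0) : ‖g‖ ≤ C * ‖g - p *ᵥ g‖ := by
  obtain ⟨i₀⟩ : Nonempty X := by
    by_contra! h
    simpa using hπ.2
  have hC : 0 ≤ C * ‖g - p *ᵥ g‖ := by simpa using hosc g i₀ i₀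
  refine (pi_norm_le_iff_of_nonneg hC).2 fun i => ?_
  have hcentre : g i = π ⬝ᵥ fun j => g i - g j := by
    have hsplit : (π ⬝ᵥ fun j => g i - g j) = (∑ j, π j) * g i - π ⬝ᵥ g := by
      simp only [dotProduct, mul_sub, Finset.sum_sub_distrib, Finset.sum_mul]
    rw [hsplit, hπ.2, hg, one_mul, sub_zero]
  rw [hcentre, Real.norm_eq_abs]
  refine (abs_dotProduct_le_norm hπ _).trans ((pi_norm_le_iff_of_nonneg hC).2 fun j => ?_)
  exact abs_sub_le_iff.2 ⟨hosc g i j, hosc g j i⟩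

/-- The operator `1 - p + 𝟙 πᵀ` is invertible; its inverse is the fundamental matrix of the chain,
which solves the Poisson equation. -/
lemma exists_sub_mulVec_eq (hπ : π ∈ stdSimplex ℝ X) (hstat : π ᵥ* p = π)
    (hosc : ∀ (g : X → ℝ) (i j : X), g i - g j ≤ C * ‖g - p *ᵥ g‖) {f : X → ℝ}
    (hf : π ⬝ᵥ f = 0) : ∃ g, g - p *ᵥ g = f ∧ ‖g‖ ≤ C * ‖f‖ := by
  classical
  set T : Matrix X X ℝ := 1 - p + vecMulVec 1 π with hT
  have hT_apply (g : X → ℝ) : T *ᵥ g = g - p *ᵥ g + (π ⬝ᵥ g) • 1 := by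
    ext i
    simp [hT, add_mulVec, sub_mulVec, vecMulVec_mulVec, -vecMulVec_one, -one_vecMulVec]
  have hT_mean (g : X → ℝ) : π ⬝ᵥ T *ᵥ g = π ⬝ᵥ g := by
    rw [hT_apply, dotProduct_add, dotProduct_sub_mulVec_of_vecMul_eq hstat, dotProduct_smul,
      dotProduct_one, hπ.2, smul_eq_mul, mul_one, zero_add]
  have hT_centred {g : X → ℝ} (hg : π ⬝ᵥ T *ᵥ g = 0) :
      g - p *ᵥ g = T *ᵥ g ∧ ‖g‖ ≤ C * ‖T *ᵥ g‖ := by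
    rw [hT_mean] at hg
    have heq : g - p *ᵥ g = T *ᵥ g := by rw [hT_apply, hg, zero_smul, add_zero]
    exact ⟨heq, heq ▸ norm_le_mul_norm_sub_mulVec hπ hosc hg⟩
  have hT_inj : Function.Injective T.mulVecLin := by
    refine (injective_iff_map_eq_zero _).2 fun g (hg : T *ᵥ g = 0) => norm_le_zero_iff.1 ?_
    simpa [hg] using (hT_centred (g := g) (by rw [hg, dotProduct_zero])).2
  obtain ⟨g, rfl⟩ : ∃ g, T *ᵥ g = f := LinearMap.injective_iff_surjective.1 hT_inj f
  exact ⟨g, hT_centred hf⟩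

end Poisson

section SubstochasticPowers

open Matrix
open scoped Matrix.Norms.Operator

variable {X : Type*} [Fintype X]

lemma opNorm_eq_norm_mulVec_one_of_nonneg {M : Matrix X X ℝ} (hM : ∀ i j, 0 ≤ M i j) :
    ‖M‖ = ‖M *ᵥ 1‖ := by
  rw [linfty_opNorm_def, Pi.norm_def]
  congr! 2 with i
  ext
  simp [mulVec, dotProduct, abs_of_nonneg, Finset.sum_nonneg, hM]

variable [DecidableEq X]

lemma opNorm_le_one_of_le_rowStochastic {p M : Matrix X X ℝ} (hp : p ∈ rowStochastic ℝ X)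
    (hM : ∀ i j, 0 ≤ M i j) (hMp : ∀ i j, M i j ≤ p i j) : ‖M‖ ≤ 1 := by
  rw [opNorm_eq_norm_mulVec_one_of_nonneg hM]
  refine (pi_norm_le_iff_of_nonneg zero_le_one).2 fun i => ?_
  rw [mulVec, dotProduct_one, Real.norm_of_nonneg (Finset.sum_nonneg fun j _ => hM i j)]
  exact (Finset.sum_le_sum fun j _ => hMp i j).trans_eq (sum_row_of_mem_rowStochastic hp i)

lemma norm_pow_mulVec_sub_smul_le {M : Matrix X X ℝ} (hM : ‖M‖ ≤ 1) {c : ℝ} (hc : |c| ≤ 1)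
    (h : X → ℝ) (n : ℕ) : ‖M ^ n *ᵥ h - c ^ n • h‖ ≤ n * ‖M *ᵥ h - c • h‖ := by
  induction n with
  | zero => simp
  | succ n ih =>
    have hsplit : M ^ (n + 1) *ᵥ h - c ^ (n + 1) • h
        = M *ᵥ (M ^ n *ᵥ h - c ^ n • h) + c ^ n • (M *ᵥ h - c • h) := by
      rw [mulVec_sub, mulVec_mulVec, ← pow_succ', mulVec_smul, smul_sub, smul_smul, ← pow_succ]
      abel
    have hfst : ‖M *ᵥ (M ^ n *ᵥ h - c ^ n • h)‖ ≤ ‖M ^ n *ᵥ h - c ^ n • h‖ :=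
      (linfty_opNorm_mulVec _ _).trans (mul_le_of_le_one_left (norm_nonneg _) hM)
    have hsnd : ‖c ^ n • (M *ᵥ h - c • h)‖ ≤ ‖M *ᵥ h - c • h‖ := by
      rw [norm_smul, norm_pow]
      exact mul_le_of_le_one_left (norm_nonneg _) (pow_le_one₀ (norm_nonneg c) hc)
    calc ‖M ^ (n + 1) *ᵥ h - c ^ (n + 1) • h‖
        ≤ ‖M *ᵥ (M ^ n *ᵥ h - c ^ n • h)‖ + ‖c ^ n • (M *ᵥ h - c • h)‖ :=
          hsplit ▸ norm_add_le _ _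
      _ ≤ n * ‖M *ᵥ h - c • h‖ + ‖M *ᵥ h - c • h‖ := add_le_add (hfst.trans ih) hsnd
      _ = (n + 1 : ℕ) * ‖M *ᵥ h - c • h‖ := by push_cast; ring

variable {p M : Matrix X X ℝ} {π : X → ℝ} {C b : ℝ} {d : X → ℝ}

/-- Adding to `𝟙` the solution `g` of the Poisson equation `g - p *ᵥ g = b • 1 - d` turns it into
an eigenvector of `M`, up to an error of second order in `d`. -/
lemma exists_norm_mulVec_one_add_sub_exp_smul_le (hp : p ∈ rowStochastic ℝ X)
    (hMp : ∀ i j, M i j ≤ p i j) (hπ : π ∈ stdSimplex ℝ X) (hstat : π ᵥ* p = π) (hC : 0 ≤ C)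
    (hosc : ∀ (g : X → ℝ) (i j : X), g i - g j ≤ C * ‖g - p *ᵥ g‖)
    (hd : d = 1 - M *ᵥ 1) (hd1 : ‖d‖ ≤ 1) (hb : b = π ⬝ᵥ d) :
    ∃ g : X → ℝ, ‖g‖ ≤ 2 * C * ‖d‖ ∧
      ‖M *ᵥ (1 + g) - Real.exp (-b) • (1 + g)‖ ≤ (1 + 6 * C) * ‖d‖ ^ 2 := by
  have hbd : |b| ≤ ‖d‖ := hb ▸ abs_dotProduct_le_norm hπ d
  have hone : ‖(1 : X → ℝ)‖ ≤ 1 := (pi_norm_le_iff_of_nonneg zero_le_one).2 (by simp)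
  obtain ⟨g, hg, hgC⟩ := exists_sub_mulVec_eq hπ hstat hosc (f := b • 1 - d) (by
    rw [dotProduct_sub, dotProduct_smul, dotProduct_one, hπ.2, hb, smul_eq_mul, mul_one, sub_self])
  have hgd : ‖g‖ ≤ 2 * C * ‖d‖ :=
    calc ‖g‖ ≤ C * (‖b • (1 : X → ℝ)‖ + ‖d‖) := by grw [hgC, norm_sub_le]
      _ ≤ C * (‖d‖ * 1 + ‖d‖) := by grw [norm_smul, Real.norm_eq_abs, hbd, hone]
      _ = 2 * C * ‖d‖ := by ring
  refine ⟨g, hgd, ?_⟩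
  have hpM : ‖p - M‖ = ‖d‖ := by
    rw [opNorm_eq_norm_mulVec_one_of_nonneg (M := p - M) fun i j => sub_nonneg.2 (hMp i j),
      sub_mulVec, one_vecMul_of_mem_rowStochastic hp, hd]
  have hexp : |Real.exp (-b) - 1 - -b| ≤ ‖d‖ ^ 2 :=
    calc |Real.exp (-b) - 1 - -b| ≤ (-b) ^ 2 :=
          Real.abs_exp_sub_one_sub_id_le ((abs_neg b).trans_le (hbd.trans hd1))
      _ ≤ ‖d‖ ^ 2 := by rw [neg_sq, ← sq_abs]; gcongr
  have hdefect : M *ᵥ (1 + g) - Real.exp (-b) • (1 + g)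
      = b • g - (p - M) *ᵥ g - (Real.exp (-b) - 1 - -b) • (1 + g) := by
    have hM1 : M *ᵥ 1 = 1 - d := by rw [hd, sub_sub_cancel]
    have hpg : p *ᵥ g = g - b • 1 + d := by rw [sub_add, ← hg, sub_sub_cancel]
    rw [mulVec_add, sub_mulVec, hM1, hpg]
    module
  calc ‖M *ᵥ (1 + g) - Real.exp (-b) • (1 + g)‖
      ≤ |b| * ‖g‖ + ‖p - M‖ * ‖g‖ + |Real.exp (-b) - 1 - -b| * (‖(1 : X → ℝ)‖ + ‖g‖) := by
        grw [hdefect, norm_sub_le, norm_sub_le, norm_smul, norm_smul, linfty_opNorm_mulVec,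
          norm_add_le, Real.norm_eq_abs, Real.norm_eq_abs]
    _ ≤ ‖d‖ * (2 * C * ‖d‖) + ‖d‖ * (2 * C * ‖d‖) + ‖d‖ ^ 2 * (1 + 2 * C * 1) := by
        rw [hpM]
        gcongr
        exact hgd.trans (by gcongr)
    _ = (1 + 6 * C) * ‖d‖ ^ 2 := by ring

lemma norm_pow_mulVec_one_sub_exp_smul_le [Nonempty X] (hp : p ∈ rowStochastic ℝ X)
    (hM : ∀ i j, 0 ≤ M i j) (hMp : ∀ i j, M i j ≤ p i j) (hπ : π ∈ stdSimplex ℝ X)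
    (hstat : π ᵥ* p = π) (hC : 0 ≤ C)
    (hosc : ∀ (g : X → ℝ) (i j : X), g i - g j ≤ C * ‖g - p *ᵥ g‖)
    (hd : d = 1 - M *ᵥ 1) (hd1 : ‖d‖ ≤ 1) (hb : b = π ⬝ᵥ d) (hb0 : 0 ≤ b) (n : ℕ) :
    ‖M ^ n *ᵥ 1 - Real.exp (-(n * b)) • 1‖ ≤ n * ((1 + 6 * C) * ‖d‖ ^ 2) + 4 * C * ‖d‖ := by
  obtain ⟨g, hg, hdefect⟩ :=
    exists_norm_mulVec_one_add_sub_exp_smul_le hp hMp hπ hstat hC hosc hd hd1 hb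
  have hM1 : ‖M‖ ≤ 1 := opNorm_le_one_of_le_rowStochastic hp hM hMp
  have hc1 : |Real.exp (-b)| ≤ 1 := by
    rw [Real.abs_exp]
    exact Real.exp_le_one_iff.2 (neg_nonpos.2 hb0)
  have hexp : Real.exp (-(n * b)) = Real.exp (-b) ^ n := by rw [← mul_neg, Real.exp_nat_mul]
  have hsplit : M ^ n *ᵥ 1 - Real.exp (-(n * b)) • 1
      = M ^ n *ᵥ (1 + g) - Real.exp (-b) ^ n • (1 + g) - M ^ n *ᵥ g + Real.exp (-b) ^ n • g := by
    rw [hexp, mulVec_add, smul_add]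
    abel
  have hMg : ‖M ^ n *ᵥ g‖ ≤ ‖g‖ :=
    (linfty_opNorm_mulVec _ _).trans <| mul_le_of_le_one_left (norm_nonneg g) <|
      (norm_pow_le M n).trans (pow_le_one₀ (norm_nonneg M) hM1)
  have hcg : ‖Real.exp (-b) ^ n • g‖ ≤ ‖g‖ := by
    rw [norm_smul, norm_pow]
    exact mul_le_of_le_one_left (norm_nonneg g) (pow_le_one₀ (norm_nonneg _) hc1)
  calc ‖M ^ n *ᵥ 1 - Real.exp (-(n * b)) • 1‖
      ≤ n * ‖M *ᵥ (1 + g) - Real.exp (-b) • (1 + g)‖ + ‖g‖ + ‖g‖ := by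
        grw [hsplit, norm_add_le, norm_sub_le, norm_pow_mulVec_sub_smul_le hM1 hc1,
          hMg, hcg]
    _ ≤ n * ((1 + 6 * C) * ‖d‖ ^ 2) + 2 * C * ‖d‖ + 2 * C * ‖d‖ := by gcongr
    _ = n * ((1 + 6 * C) * ‖d‖ ^ 2) + 4 * C * ‖d‖ := by ring

end SubstochasticPowers

section ScalingLimit

open Matrix Relation
open scoped Matrix.Norms.Operator

variable {X : Type*} [Fintype X]

lemma norm_le_mul_dotProduct_of_one_le {π d : X → ℝ} {K : ℝ} (hK : ∀ y, 1 ≤ K * π y)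
    (hd : ∀ y, 0 ≤ d y) : ‖d‖ ≤ K * (π ⬝ᵥ d) := by
  have hterm (y : X) : 0 ≤ K * π y * d y := mul_nonneg (zero_le_one.trans (hK y)) (hd y)
  have hsum : K * (π ⬝ᵥ d) = ∑ y, K * π y * d y := by
    simp only [dotProduct, Finset.mul_sum, mul_assoc]
  rw [hsum]
  refine (pi_norm_le_iff_of_nonneg (Finset.sum_nonneg fun y _ => hterm y)).2 fun y => ?_
  rw [Real.norm_of_nonneg (hd y)]
  calc d y ≤ K * π y * d y := le_mul_of_one_le_left (hd y) (hK y)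
    _ ≤ ∑ y, K * π y * d y := Finset.single_le_sum (fun y _ => hterm y) (Finset.mem_univ y)

variable {ι : Type*} {l : Filter ι}

lemma tendsto_dotProduct_of_tendsto_smul_one {q w : ι → X → ℝ} {b : ℝ}
    (hq : ∀ᶠ ε in l, q ε ∈ stdSimplex ℝ X) (hw : Tendsto w l (𝓝 (b • 1))) :
    Tendsto (fun ε => q ε ⬝ᵥ w ε) l (𝓝 b) := by
  refine tendsto_iff_norm_sub_tendsto_zero.2 <|
    squeeze_zero' (.of_forall fun ε => norm_nonneg _) ?_ (tendsto_iff_norm_sub_tendsto_zero.1 hw)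
  filter_upwards [hq] with ε hq
  have hcentre : q ε ⬝ᵥ w ε - b = q ε ⬝ᵥ (w ε - b • 1) := by
    rw [dotProduct_sub, dotProduct_smul, dotProduct_one, hq.2, smul_eq_mul, mul_one]
  rw [hcentre]
  exact abs_dotProduct_le_norm hq _

lemma tendsto_mulVec_smul_one {M : ι → Matrix X X ℝ} {u : ι → X → ℝ} {a b : ℝ}
    (hM : ∀ᶠ ε in l, ‖M ε‖ ≤ 1) (hM1 : Tendsto (fun ε => M ε *ᵥ 1) l (𝓝 (a • 1)))
    (hu : Tendsto u l (𝓝 (b • 1))) : Tendsto (fun ε => M ε *ᵥ u ε) l (𝓝 ((a * b) • 1)) := by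
  have hdiff : Tendsto (fun ε => M ε *ᵥ (u ε - b • 1)) l (𝓝 0) := by
    refine squeeze_zero_norm' ?_ (tendsto_iff_norm_sub_tendsto_zero.1 hu)
    filter_upwards [hM] with ε hM
    exact (linfty_opNorm_mulVec _ _).trans (mul_le_of_le_one_left (norm_nonneg _) hM)
  have hsplit (ε : ι) : M ε *ᵥ u ε = M ε *ᵥ (u ε - b • 1) + b • M ε *ᵥ 1 := by
    rw [mulVec_sub, mulVec_smul, sub_add_cancel]
  simpa only [hsplit, zero_add, smul_smul, mul_comm b a] using hdiff.add (hM1.const_smul b)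

variable [DecidableEq X]

lemma tendsto_prod_mulVec_one {n : ℕ} {M : ℕ → ι → Matrix X X ℝ} {a : ℕ → ℝ}
    (hM : ∀ r < n, ∀ᶠ ε in l, ‖M r ε‖ ≤ 1)
    (hM1 : ∀ r < n, Tendsto (fun ε => M r ε *ᵥ 1) l (𝓝 (a r • 1))) :
    Tendsto (fun ε => ((List.range n).map fun r => M r ε).prod *ᵥ 1) l
      (𝓝 ((∏ r ∈ Finset.range n, a r) • 1)) := by
  induction n generalizing M a with
  | zero => simpa using tendsto_const_nhds
  | succ n ih =>
    have htail := ih (fun r hr => hM (r + 1) (by lia)) fun r hr => hM1 (r + 1) (by lia)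
    simpa only [List.prod_range_succ', mulVec_mulVec, Finset.prod_range_succ', mul_comm] using
      tendsto_mulVec_smul_one (hM 0 n.succ_pos) (hM1 0 n.succ_pos) htail

lemma exists_eventually_mem_stochasticWithEdges {p : ι → Matrix X X ℝ}
    (hp : ∀ᶠ ε in l, p ε ∈ rowStochastic ℝ X) :
    ∃ δ > 0, ∀ᶠ ε in l,
      p ε ∈ stochasticWithEdges (fun i j => 0 < liminf (fun ε => p ε i j) l) δ := by
  have hedge (i j : X) : ∀ᶠ δ in 𝓝[>] (0 : ℝ), 0 < liminf (fun ε => p ε i j) l →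
      ∀ᶠ ε in l, δ ≤ p ε i j := by
    by_cases hij : 0 < liminf (fun ε => p ε i j) l
    · have hbdd : l.IsBoundedUnder (· ≥ ·) fun ε => p ε i j :=
        ⟨0, eventually_map.2 (hp.mono fun ε hp => nonneg_of_mem_rowStochastic hp)⟩
      filter_upwards [Ioo_mem_nhdsGT hij] with δ hδ _
      exact (eventually_lt_of_lt_liminf hδ.2 hbdd).mono fun _ => le_of_lt
    · exact .of_forall fun δ h => absurd h hij
  obtain ⟨δ, hedge, hδ⟩ := ((eventually_all.2 fun i => eventually_all.2 (hedge i)).and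
    self_mem_nhdsWithin).exists
  refine ⟨δ, hδ, hp.and ?_⟩
  simpa only [eventually_all] using hedge

variable [Nonempty X] {E : X → X → Prop} {δ a : ℝ}
  {p M : ι → Matrix X X ℝ} {π : ι → X → ℝ} {c : ι → ℕ}

lemma tendsto_pow_mulVec_one (hδ : 0 < δ) (hE : ∀ x y, ReflTransGen E x y)
    (hp : ∀ᶠ ε in l, p ε ∈ stochasticWithEdges E δ) (hM : ∀ᶠ ε in l, ∀ i j, 0 ≤ M ε i j)
    (hMp : ∀ᶠ ε in l, ∀ i j, M ε i j ≤ p ε i j)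
    (hπ : ∀ᶠ ε in l, π ε ∈ stdSimplex ℝ X) (hstat : ∀ᶠ ε in l, π ε ᵥ* p ε = π ε)
    (hb : Tendsto (fun ε => π ε ⬝ᵥ (1 - M ε *ᵥ 1)) l (𝓝 0))
    (hcb : Tendsto (fun ε => c ε * (π ε ⬝ᵥ (1 - M ε *ᵥ 1))) l (𝓝 a)) :
    Tendsto (fun ε => M ε ^ c ε *ᵥ 1) l (𝓝 (Real.exp (-a) • 1)) := by
  obtain ⟨K, hK⟩ := exists_one_le_mul_stationary hδ hE
  obtain ⟨C, hC, hosc⟩ := exists_sub_le_mul_norm_sub_mulVec hδ hE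
  set d : ι → X → ℝ := fun ε => 1 - M ε *ᵥ 1
  set b : ι → ℝ := fun ε => π ε ⬝ᵥ d ε
  have hd0 : ∀ᶠ ε in l, ∀ y, 0 ≤ d ε y := by
    filter_upwards [hp, hMp] with ε hp hMp y
    have hle : (M ε *ᵥ 1) y ≤ (p ε *ᵥ 1) y :=
      dotProduct_le_dotProduct_of_nonneg_right (hMp y) zero_le_one
    rw [one_vecMul_of_mem_rowStochastic hp.1] at hle
    exact sub_nonneg.2 hle
  have hdb : ∀ᶠ ε in l, ‖d ε‖ ≤ K * b ε := by
    filter_upwards [hp, hπ, hstat, hd0] with ε hp hπ hstat hd0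
    exact norm_le_mul_dotProduct_of_one_le (hK _ hp _ hπ hstat) hd0
  have hnorm : Tendsto (fun ε => ‖d ε‖) l (𝓝 0) :=
    squeeze_zero' (.of_forall fun ε => norm_nonneg _) hdb (by simpa using hb.const_mul K)
  have hsq : Tendsto (fun ε => c ε * ‖d ε‖ ^ 2) l (𝓝 0) := by
    refine squeeze_zero' (.of_forall fun ε => by positivity) ?_
      (by simpa only [mul_zero] using (hcb.const_mul (K ^ 2)).mul hb)
    filter_upwards [hdb] with ε hdb
    calc c ε * ‖d ε‖ ^ 2 ≤ c ε * (K * b ε) ^ 2 := by gcongr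
      _ = K ^ 2 * (c ε * b ε) * b ε := by ring
  have hbound : Tendsto (fun ε => c ε * ((1 + 6 * C) * ‖d ε‖ ^ 2) + 4 * C * ‖d ε‖) l (𝓝 0) := by
    simpa [mul_left_comm] using (hsq.const_mul (1 + 6 * C)).add (hnorm.const_mul (4 * C))
  have hexp : Tendsto (fun ε => Real.exp (-(c ε * b ε)) • (1 : X → ℝ)) l
      (𝓝 (Real.exp (-a) • 1)) :=
    ((Real.continuous_exp.tendsto _).comp hcb.neg).smul_const 1
  refine (tendsto_iff_of_dist ?_).2 hexp
  refine squeeze_zero' (.of_forall fun ε => dist_nonneg) ?_ hbound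
  filter_upwards [hp, hM, hMp, hπ, hstat, hd0, hnorm.eventually_le_const zero_lt_one]
    with ε hp hM hMp hπ hstat hd0 hd1
  have hb0 : 0 ≤ b ε := Finset.sum_nonneg fun y _ => mul_nonneg (hπ.1 y) (hd0 y)
  rw [dist_eq_norm]
  exact norm_pow_mulVec_one_sub_exp_smul_le hp.1 hM hMp hπ hstat hC (hosc _ hp) rfl hd1 rfl hb0 _

end ScalingLimit

section Blocks

variable {N : ℕ → ℕ} {n : ℕ}

/-- The index `r` of the block `[N r, N (r + 1))` containing `k`, among the `n` consecutive blocks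
cut out by `N 0 ≤ ⋯ ≤ N n`. -/
def blockIndex (N : ℕ → ℕ) (n k : ℕ) : ℕ :=
  Nat.findGreatest (fun r => N r ≤ k) n

lemma blockIndex_eq (hN : MonotoneOn N (Iic n)) {r k : ℕ} (hr : r < n)
    (hk : k ∈ Ico (N r) (N (r + 1))) : blockIndex N n k = r :=
  Nat.findGreatest_eq_iff.2 ⟨hr.le, fun _ => hk.1, fun _ hrj hjn =>
    (hk.2.trans_le (hN (mem_Iic.2 hr) (mem_Iic.2 hjn) hrj)).not_ge⟩

lemma sum_range_comp_blockIndex_mul (h0 : N 0 = 0) (hN : MonotoneOn N (Iic n)) (s x : ℕ → ℝ) :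
    ∑ k ∈ Finset.range (N n), s (blockIndex N n k) * x k
      = ∑ r ∈ Finset.range n,
          s r * (∑ k ∈ Finset.range (N (r + 1)), x k - ∑ k ∈ Finset.range (N r), x k) := by
  have htelescope := Finset.sum_range_sub
    (fun r => ∑ k ∈ Finset.range (N r), s (blockIndex N n k) * x k) n
  rw [h0, Finset.range_zero, Finset.sum_empty, sub_zero] at htelescope
  rw [← htelescope]
  refine Finset.sum_congr rfl fun r hr => ?_
  have hrn : r < n := Finset.mem_range.1 hr
  have hle : N r ≤ N (r + 1) := hN (mem_Iic.2 hrn.le) (mem_Iic.2 hrn) r.le_succ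
  rw [← Finset.sum_Ico_eq_sub _ hle, ← Finset.sum_Ico_eq_sub _ hle, Finset.mul_sum]
  exact Finset.sum_congr rfl fun k hk => by rw [blockIndex_eq hN hrn (Finset.mem_Ico.1 hk)]

lemma prod_map_range_eq_prod_pow {R : Type*} [Monoid R] (h0 : N 0 = 0)
    (hN : ∀ r < n, N r ≤ N (r + 1)) {f g : ℕ → R}
    (hfg : ∀ r < n, ∀ k ∈ Ico (N r) (N (r + 1)), g k = f r) :
    ((List.range (N n)).map g).prod
      = ((List.range n).map fun r => f r ^ (N (r + 1) - N r)).prod := by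
  induction n with
  | zero => simp [h0]
  | succ n ih =>
    have hblock : (List.range (N (n + 1) - N n)).map (g ∘ (N n + ·))
        = List.replicate (N (n + 1) - N n) (f n) := by
      refine List.eq_replicate_iff.2 ⟨by simp, fun b hb => ?_⟩
      obtain ⟨k, hk, rfl⟩ := List.mem_map.1 hb
      have hk := List.mem_range.1 hk
      exact hfg n n.lt_succ_self _ ⟨by lia, by lia⟩
    have hrange : List.range (N (n + 1))
        = List.range (N n) ++ (List.range (N (n + 1) - N n)).map (N n + ·) := by
      rw [← List.range_add, Nat.add_sub_cancel' (hN n n.lt_succ_self)]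
    rw [hrange, List.map_append, List.prod_append, List.map_map, hblock, List.prod_replicate,
      List.prod_range_succ, ih (fun r hr => hN r (by lia)) fun r hr => hfg r (by lia)]

lemma tendsto_natFloor_sub_natFloor_div {ι : Type*} {l : Filter ι} {v : ι → ℝ}
    (hv : Tendsto v l atTop) {x y : ℝ} (hx : 0 ≤ x) (hxy : x ≤ y) :
    Tendsto (fun ε => ((⌊y * v ε⌋₊ - ⌊x * v ε⌋₊ : ℕ) : ℝ) / v ε) l (𝓝 (y - x)) := by
  have hfloor {z : ℝ} (hz : 0 ≤ z) : Tendsto (fun ε => (⌊z * v ε⌋₊ : ℝ) / v ε) l (𝓝 z) :=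
    (tendsto_nat_floor_mul_div_atTop hz).comp hv
  refine ((hfloor (hx.trans hxy)).sub (hfloor hx)).congr' ?_
  filter_upwards [hv.eventually_ge_atTop 0] with ε hv
  rw [Nat.cast_sub (Nat.floor_mono (mul_le_mul_of_nonneg_right hxy hv)), sub_div]

end Blocks

section Integrals

variable {Ω : Type*} [MeasurableSpace Ω] {μ : Measure Ω}

lemma integrable_exp_neg_of_nonneg [IsFiniteMeasure μ] {f : Ω → ℝ} (hf : Measurable f)
    (hf0 : ∀ ω, 0 ≤ f ω) : Integrable (fun ω => Real.exp (-f ω)) μ := by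
  refine .of_bound (by fun_prop) 1 (.of_forall fun ω => ?_)
  rw [Real.norm_eq_abs, Real.abs_exp]
  exact Real.exp_le_one_iff.2 (neg_nonpos.2 (hf0 ω))

lemma sum_setIntegral_preimage_singleton {X : Type*} [Fintype X] [MeasurableSpace X]
    [MeasurableSingletonClass X] {Y : Ω → X} (hY : Measurable Y) {f : Ω → ℝ}
    (hf : Integrable f μ) : ∑ x, ∫ ω in Y ⁻¹' {x}, f ω ∂μ = ∫ ω, f ω ∂μ := by
  have hdisjoint : Pairwise (Function.onFun Disjoint fun x => Y ⁻¹' {x}) := fun x y hxy =>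
    Disjoint.preimage Y (disjoint_singleton.2 hxy)
  rw [← integral_iUnion_fintype (fun x => hY (measurableSet_singleton x)) hdisjoint
    fun _ => hf.integrableOn, ← preimage_iUnion, iUnion_of_singleton, preimage_univ,
    setIntegral_univ]

lemma integral_sum_ofReal_smul_measure {X : Type*} [Fintype X] {q : X → ℝ} (hq : ∀ i, 0 ≤ q i)
    {P : X → Measure Ω} {f : Ω → ℝ} (hf : ∀ i, Integrable f (P i)) :
    ∫ ω, f ω ∂(∑ i, ENNReal.ofReal (q i) • P i) = ∑ i, q i * ∫ ω, f ω ∂(P i) := by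
  rw [integral_finsetSum_measure fun i _ => (hf i).smul_measure ENNReal.ofReal_ne_top]
  simp only [integral_smul_measure, ENNReal.toReal_ofReal (hq _), smul_eq_mul]

lemma pi_eq_of_forall_pi_Iic {ι : Type*} [Fintype ι] {ν : ι → Measure ℝ}
    [∀ i, IsFiniteMeasure (ν i)] {ρ : Measure (ι → ℝ)}
    (hρ : ∀ T : ι → ℝ, ρ (univ.pi fun i => Iic (T i)) = ∏ i, ν i (Iic (T i))) :
    Measure.pi ν = ρ := by
  have hcover : ⋃ k : ℕ, Iic (k : ℝ) = univ :=
    iUnion_eq_univ_iff.2 fun x => (exists_nat_ge x).imp fun _ => mem_Iic.2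
  refine Measure.pi_eq_generateFrom (C := fun _ => range Iic)
    (fun _ => (borel_eq_generateFrom_Iic ℝ).symm.trans (BorelSpace.measurable_eq (α := ℝ)).symm)
    (fun _ => isPiSystem_Iic)
    (fun i => ⟨fun k => Iic k, fun k => mem_range_self _, fun k => measure_lt_top _ _, hcover⟩) ?_
  intro S hS
  choose T hT using hS
  obtain rfl : S = fun i => Iic (T i) := funext fun i => (hT i).symm
  exact hρ T

end Integrals

section MarkovRenewal

open Matrix

variable {X Ω : Type*} {η : ℕ → Ω → X} {κ : ℕ → Ω → ℝ}

/-- The event that the first `n` steps of the chain `η` follow the path `I`. -/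
def pathEvent (η : ℕ → Ω → X) (n : ℕ) (I : ℕ → X) : Set Ω :=
  {ω | ∀ k ≤ n, η k ω = I k}

lemma pathEvent_succ_update (n : ℕ) (I : ℕ → X) (x : X) :
    pathEvent η (n + 1) (Function.update I (n + 1) x)
      = pathEvent η n I ∩ η (n + 1) ⁻¹' {x} := by
  ext ω
  have hupdate (k : ℕ) (hk : k ≤ n) : Function.update I (n + 1) x k = I k :=
    Function.update_of_ne (by lia) _ _
  simp +contextual [pathEvent, Nat.le_succ_iff, or_imp, forall_and, hupdate]

variable [MeasurableSpace Ω] {P : X → Measure Ω}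

/-- The law of the first reward on the event that the first transition leads from `i` to `j`. -/
def transitionMeasure (η : ℕ → Ω → X) (κ : ℕ → Ω → ℝ) (P : X → Measure Ω) (i j : X) :
    Measure ℝ :=
  ((P i).restrict (η 1 ⁻¹' {j})).map (κ 1)

/-- The matrix of Laplace transforms at `s` of the transition measures; at `s = 0` it is the
transition matrix of the embedded chain. -/
def laplaceMatrix (η : ℕ → Ω → X) (κ : ℕ → Ω → ℝ) (P : X → Measure Ω) (s : ℝ) : Matrix X X ℝ :=
  .of fun i j => ∫ ω in η 1 ⁻¹' {j}, Real.exp (-(s * κ 1 ω)) ∂(P i)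

instance [∀ i, IsFiniteMeasure (P i)] (i j : X) :
    IsFiniteMeasure (transitionMeasure η κ P i j) := by
  unfold transitionMeasure
  infer_instance

lemma laplaceMatrix_nonneg (s : ℝ) (i j : X) : 0 ≤ laplaceMatrix η κ P s i j :=
  integral_nonneg fun _ => (Real.exp_pos _).le

lemma laplaceMatrix_zero_apply (i j : X) :
    laplaceMatrix η κ P 0 i j = (P i).real (η 1 ⁻¹' {j}) := by
  simp [laplaceMatrix]

variable [MeasurableSpace X]

/-- The Markov renewal processes with states `η n`, nonnegative rewards `κ n` (`n ≥ 1`) and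
semi-Markov kernel `Q`, given by the laws `P i` of the process started in the state `i`. The Markov
property is encoded by the finite-dimensional distributions of the process. -/
structure IsMarkovRenewalProcess (Q : X → X → ℝ → ℝ) (η : ℕ → Ω → X) (κ : ℕ → Ω → ℝ)
    (P : X → Measure Ω) : Prop where
  isProbabilityMeasure : ∀ i, IsProbabilityMeasure (P i)
  measurable_state : ∀ n, Measurable (η n)
  measurable_reward : ∀ n, Measurable (κ n)
  reward_nonneg : ∀ n ω, 0 ≤ κ n ω
  measure_path : ∀ (n : ℕ) (I : ℕ → X) (T : ℕ → ℝ),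
    P (I 0) {ω | ∀ k ≤ n, η k ω = I k ∧ (1 ≤ k → κ k ω ≤ T k)}
      = ENNReal.ofReal (∏ k ∈ Finset.Icc 1 n, Q (I (k - 1)) (I k) (T k))

variable {Q : X → X → ℝ → ℝ}

namespace IsMarkovRenewalProcess

variable (h : IsMarkovRenewalProcess Q η κ P)
include h

lemma ae_state_zero_eq [MeasurableSingletonClass X] (i : X) : ∀ᵐ ω ∂(P i), η 0 ω = i := by
  have := h.isProbabilityMeasure i
  have hpath := h.measure_path 0 (fun _ => i) 0
  have hone : P i {ω | η 0 ω = i} = 1 := by simpa using hpath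
  exact (mem_ae_iff_prob_eq_one (h.measurable_state 0 (measurableSet_singleton i))).2 hone

lemma integrable_exp_neg_sum (i : X) {a : ℕ → ℝ} (ha : ∀ k, 0 ≤ a k) (n : ℕ) :
    Integrable (fun ω => Real.exp (-∑ k ∈ Finset.range n, a k * κ (k + 1) ω)) (P i) := by
  have := h.isProbabilityMeasure i
  have := h.measurable_reward
  exact integrable_exp_neg_of_nonneg (by fun_prop) fun ω =>
    Finset.sum_nonneg fun k _ => mul_nonneg (ha k) (h.reward_nonneg _ ω)

lemma integrable_exp_neg_mul (i : X) {s : ℝ} (hs : 0 ≤ s) :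
    Integrable (fun ω => Real.exp (-(s * κ 1 ω))) (P i) := by
  simpa using h.integrable_exp_neg_sum i (fun _ => hs) 1

lemma laplaceMatrix_le {s : ℝ} (hs : 0 ≤ s) (i j : X) :
    laplaceMatrix η κ P s i j ≤ laplaceMatrix η κ P 0 i j :=
  integral_mono (h.integrable_exp_neg_mul i hs).integrableOn
    (h.integrable_exp_neg_mul i le_rfl).integrableOn fun ω => by
      simpa using mul_nonneg hs (h.reward_nonneg 1 ω)

section Fintype

variable [Fintype X] [MeasurableSingletonClass X]

lemma laplaceMatrix_mulVec_one {s : ℝ} (hs : 0 ≤ s) (i : X) :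
    (laplaceMatrix η κ P s *ᵥ 1) i = ∫ ω, Real.exp (-(s * κ 1 ω)) ∂(P i) := by
  rw [mulVec, dotProduct_one]
  exact sum_setIntegral_preimage_singleton (h.measurable_state 1) (h.integrable_exp_neg_mul i hs)

lemma laplaceMatrix_zero_mem_rowStochastic [DecidableEq X] :
    laplaceMatrix η κ P 0 ∈ rowStochastic ℝ X := by
  refine ⟨laplaceMatrix_nonneg 0, funext fun i => ?_⟩
  have := h.isProbabilityMeasure i
  simp [h.laplaceMatrix_mulVec_one le_rfl]

end Fintype

variable [MeasurableSingletonClass X]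

lemma transitionMeasure_Iic (i j : X) (t : ℝ) :
    transitionMeasure η κ P i j (Iic t) = ENNReal.ofReal (Q i j t) := by
  have hpath := h.measure_path 1 (fun k => if k = 0 then i else j) fun _ => t
  simp only [Finset.Icc_self, Finset.prod_singleton, Nat.sub_self, one_ne_zero, if_true,
    if_false] at hpath
  rw [transitionMeasure, Measure.map_apply (h.measurable_reward 1) measurableSet_Iic,
    Measure.restrict_apply (h.measurable_reward 1 measurableSet_Iic), ← hpath]
  refine measure_congr ?_
  filter_upwards [h.ae_state_zero_eq i] with ω hω
  refine propext (?_ : κ 1 ω ≤ t ∧ η 1 ω = j ↔ ∀ k ≤ 1, _)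
  simp [Nat.le_one_iff_eq_zero_or_eq_one, or_imp, forall_and, hω, and_comm]

lemma measure_path_eq_prod (n : ℕ) (I : ℕ → X) (T : ℕ → ℝ) :
    P (I 0) {ω | ∀ k ≤ n, η k ω = I k ∧ (1 ≤ k → κ k ω ≤ T k)}
      = ∏ k ∈ Finset.range n, transitionMeasure η κ P (I k) (I (k + 1)) (Iic (T (k + 1))) := by
  induction n with
  | zero => rw [h.measure_path, Finset.Icc_eq_empty (by lia), Finset.prod_empty, Finset.range_zero,
      Finset.prod_empty, ENNReal.ofReal_one]
  | succ n ih =>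
    have hmono : {ω | ∀ k ≤ n + 1, η k ω = I k ∧ (1 ≤ k → κ k ω ≤ T k)}
        ⊆ {ω | ∀ k ≤ n, η k ω = I k ∧ (1 ≤ k → κ k ω ≤ T k)} :=
      fun ω hω k hk => hω k (hk.trans n.le_succ)
    rw [Finset.prod_range_succ, ← ih, h.transitionMeasure_Iic]
    rcases le_or_gt 0 (∏ k ∈ Finset.Icc 1 n, Q (I (k - 1)) (I k) (T k)) with hprod | hprod
    · rw [h.measure_path, h.measure_path, ← ENNReal.ofReal_mul hprod,
        Finset.prod_Icc_succ_top n.succ_pos, Nat.add_sub_cancel]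
    · have hzero := (h.measure_path n I T).trans (ENNReal.ofReal_of_nonpos hprod.le)
      rw [hzero, zero_mul]
      exact measure_mono_null hmono hzero

lemma map_restrict_pathEvent (n : ℕ) (I : ℕ → X) :
    ((P (I 0)).restrict (pathEvent η n I)).map (fun ω (k : Fin n) => κ (k + 1) ω)
      = Measure.pi fun k : Fin n => transitionMeasure η κ P (I k) (I (k + 1)) := by
  have := h.isProbabilityMeasure
  have hmeas : Measurable fun ω (k : Fin n) => κ (k + 1) ω :=
    measurable_pi_lambda _ fun k => h.measurable_reward _
  refine (pi_eq_of_forall_pi_Iic fun T => ?_).symm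
  have hIic : MeasurableSet (univ.pi fun k => Iic (T k)) := .univ_pi fun k => measurableSet_Iic
  set U : ℕ → ℝ := fun k => if hk : k - 1 < n then T ⟨k - 1, hk⟩ else 0
  have hU (k : Fin n) : U (k + 1) = T k := by simp [U]
  have hpath := h.measure_path_eq_prod n I U
  rw [← Fin.prod_univ_eq_prod_range
    (fun k => transitionMeasure η κ P (I k) (I (k + 1)) (Iic (U (k + 1))))] at hpath
  simp only [hU] at hpath
  rw [Measure.map_apply hmeas hIic, Measure.restrict_apply (hmeas hIic), ← hpath]
  congr 1
  ext ω
  simp only [mem_inter_iff, mem_preimage, mem_univ_pi, mem_Iic, pathEvent, mem_ofPred_eq, ← hU]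
  refine ⟨fun ⟨hκ, hη⟩ k hk => ⟨hη k hk, fun hk1 => ?_⟩,
    fun hω => ⟨fun k => (hω (k + 1) (by lia)).2 (by lia), fun k hk => (hω k hk).1⟩⟩
  simpa only [Nat.sub_add_cancel hk1] using hκ ⟨k - 1, by lia⟩

lemma setIntegral_pathEvent (n : ℕ) (I : ℕ → X) (a : ℕ → ℝ) :
    ∫ ω in pathEvent η n I, Real.exp (-∑ k ∈ Finset.range n, a k * κ (k + 1) ω) ∂(P (I 0))
      = ∏ k ∈ Finset.range n, laplaceMatrix η κ P (a k) (I k) (I (k + 1)) := by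
  have := h.isProbabilityMeasure
  have hentry (s : ℝ) (i j : X) :
      ∫ x, Real.exp (-(s * x)) ∂(transitionMeasure η κ P i j) = laplaceMatrix η κ P s i j :=
    integral_map (h.measurable_reward 1).aemeasurable (by fun_prop)
  have hmeas : Measurable fun ω (k : Fin n) => κ (k + 1) ω :=
    measurable_pi_lambda _ fun k => h.measurable_reward _
  have hexp : Measurable fun x : Fin n → ℝ => Real.exp (-∑ k : Fin n, a k * x k) := by fun_prop
  have hprod := integral_fintype_prod_eq_prod (𝕜 := ℝ)
    (fun (k : Fin n) (x : ℝ) => Real.exp (-(a k * x)))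
    (μ := fun k : Fin n => transitionMeasure η κ P (I k) (I (k + 1)))
  simp only [← h.map_restrict_pathEvent, hentry, ← Real.exp_sum, Finset.sum_neg_distrib] at hprod
  rw [integral_map hmeas.aemeasurable hexp.aestronglyMeasurable] at hprod
  simpa only [Finset.prod_range, Finset.sum_range] using hprod

variable [Fintype X] [DecidableEq X]

lemma setIntegral_pathEvent_add {a : ℕ → ℝ} (ha : ∀ k, 0 ≤ a k) (r n : ℕ) (I : ℕ → X) :
    ∫ ω in pathEvent η n I, Real.exp (-∑ k ∈ Finset.range (n + r), a k * κ (k + 1) ω) ∂(P (I 0))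
      = (∏ k ∈ Finset.range n, laplaceMatrix η κ P (a k) (I k) (I (k + 1)))
        * (((List.range r).map fun k => laplaceMatrix η κ P (a (n + k))).prod *ᵥ 1) (I n) := by
  induction r generalizing n I with
  | zero => simp [h.setIntegral_pathEvent]
  | succ r ih =>
    have hupdate (x : X) (k : ℕ) (hk : k ≤ n) : Function.update I (n + 1) x k = I k :=
      Function.update_of_ne (by lia) _ _
    have hprefix (x : X) : ∏ k ∈ Finset.range n, laplaceMatrix η κ P (a k)
          (Function.update I (n + 1) x k) (Function.update I (n + 1) x (k + 1))
        = ∏ k ∈ Finset.range n, laplaceMatrix η κ P (a k) (I k) (I (k + 1)) :=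
      Finset.prod_congr rfl fun k hk => by
        rw [hupdate x k (Finset.mem_range.1 hk).le, hupdate x (k + 1) (Finset.mem_range.1 hk)]
    have hbranch (x : X) := ih (n + 1) (Function.update I (n + 1) x)
    simp only [pathEvent_succ_update, hupdate _ 0 n.zero_le, hupdate _ n le_rfl,
      Finset.prod_range_succ, hprefix, Function.update_self] at hbranch
    have hlist : ((List.range (r + 1)).map fun k => laplaceMatrix η κ P (a (n + k))).prod
        = laplaceMatrix η κ P (a n)
          * ((List.range r).map fun k => laplaceMatrix η κ P (a (n + 1 + k))).prod := by
      simp only [List.prod_range_succ', add_zero, Nat.succ_eq_add_one, ← add_assoc,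
        add_right_comm n 1]
    rw [hlist, ← mulVec_mulVec, mulVec, dotProduct, Finset.mul_sum, ← add_assoc,
      add_right_comm n r 1, ← sum_setIntegral_preimage_singleton (h.measurable_state (n + 1))
        (h.integrable_exp_neg_sum _ ha _).integrableOn]
    refine Finset.sum_congr rfl fun x _ => ?_
    rw [Measure.restrict_restrict (h.measurable_state (n + 1) (measurableSet_singleton x)),
      inter_comm, hbranch, mul_assoc]

lemma integral_exp_neg_sum {a : ℕ → ℝ} (ha : ∀ k, 0 ≤ a k) (n : ℕ) (i : X) :
    ∫ ω, Real.exp (-∑ k ∈ Finset.range n, a k * κ (k + 1) ω) ∂(P i)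
      = (((List.range n).map fun k => laplaceMatrix η κ P (a k)).prod *ᵥ 1) i := by
  have hstart : pathEvent η 0 (fun _ => i) =ᵐ[P i] univ := by
    filter_upwards [h.ae_state_zero_eq i] with ω hω
    exact eq_true fun k hk => Nat.le_zero.1 hk ▸ hω
  simpa [setIntegral_congr_set hstart] using h.setIntegral_pathEvent_add ha n 0 fun _ => i

end IsMarkovRenewalProcess

end MarkovRenewal

section FiniteDimensionalDistributions

open Matrix Relation
open scoped Matrix.Norms.Operator

variable {X Ω ι : Type*} [MeasurableSpace Ω] [Fintype X] [MeasurableSpace X]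
  [MeasurableSingletonClass X]

namespace IsMarkovRenewalProcess

variable [DecidableEq X] {Q : X → X → ℝ → ℝ} {η : ℕ → Ω → X} {κ : ℕ → Ω → ℝ} {P : X → Measure Ω}

lemma norm_laplaceMatrix_pow_le_one [Nonempty X] (h : IsMarkovRenewalProcess Q η κ P) {s : ℝ}
    (hs : 0 ≤ s) (n : ℕ) : ‖laplaceMatrix η κ P s ^ n‖ ≤ 1 :=
  (norm_pow_le _ n).trans <| pow_le_one₀ (norm_nonneg _) <|
    opNorm_le_one_of_le_rowStochastic h.laplaceMatrix_zero_mem_rowStochastic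
      (laplaceMatrix_nonneg s) (h.laplaceMatrix_le hs)

lemma integral_exp_neg_block (h : IsMarkovRenewalProcess Q η κ P) {q : X → ℝ}
    (hq : ∀ i, 0 ≤ q i) {N : ℕ → ℕ} {n : ℕ} (h0 : N 0 = 0) (hN : MonotoneOn N (Iic n))
    {s : ℕ → ℝ} (hs : ∀ r, 0 ≤ s r) :
    ∫ ω, Real.exp (-∑ r ∈ Finset.range n, s r * (∑ k ∈ Finset.range (N (r + 1)), κ (k + 1) ω
        - ∑ k ∈ Finset.range (N r), κ (k + 1) ω)) ∂(∑ i, ENNReal.ofReal (q i) • P i)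
      = q ⬝ᵥ (((List.range n).map fun r =>
          laplaceMatrix η κ P (s r) ^ (N (r + 1) - N r)).prod *ᵥ 1) := by
  have ha (k : ℕ) : 0 ≤ s (blockIndex N n k) := hs _
  have hsucc (r : ℕ) (hr : r < n) : N r ≤ N (r + 1) :=
    hN (mem_Iic.2 hr.le) (mem_Iic.2 hr) r.le_succ
  simp only [← sum_range_comp_blockIndex_mul h0 hN]
  rw [integral_sum_ofReal_smul_measure hq fun i => h.integrable_exp_neg_sum i ha (N n),
    ← prod_map_range_eq_prod_pow h0 hsucc
      (g := fun k => laplaceMatrix η κ P (s (blockIndex N n k)))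
      fun r hr k hk => by rw [blockIndex_eq hN hr hk]]
  simp only [h.integral_exp_neg_sum ha, dotProduct]

end IsMarkovRenewalProcess

variable [Nonempty X] {l : Filter ι} {Q : ι → X → X → ℝ → ℝ} {η : ι → ℕ → Ω → X} {κ : ι → ℕ → Ω → ℝ}
  {P : ι → X → Measure Ω} {p : ι → Matrix X X ℝ} {π : ι → X → ℝ} {v : ι → ℝ}

lemma tendsto_laplaceMatrix_pow_mulVec_one [DecidableEq X]
    (hMRP : ∀ᶠ ε in l, IsMarkovRenewalProcess (Q ε) (η ε) (κ ε) (P ε))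
    (hp : ∀ᶠ ε in l, p ε = laplaceMatrix (η ε) (κ ε) (P ε) 0)
    (hconn : ∀ x y, ReflTransGen (fun i j => 0 < liminf (fun ε => p ε i j) l) x y)
    (hπ : ∀ᶠ ε in l, π ε ∈ stdSimplex ℝ X) (hstat : ∀ᶠ ε in l, π ε ᵥ* p ε = π ε)
    (hv : Tendsto v l atTop) {s a : ℝ} (hs : 0 ≤ s)
    (ha : Tendsto (fun ε => v ε * (1 - ∑ i, π ε i * ∫ ω, Real.exp (-(s * κ ε 1 ω)) ∂(P ε i))) l
      (𝓝 a))
    {c : ι → ℕ} {τ : ℝ} (hc : Tendsto (fun ε => c ε / v ε) l (𝓝 τ)) :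
    Tendsto (fun ε => laplaceMatrix (η ε) (κ ε) (P ε) s ^ c ε *ᵥ 1) l
      (𝓝 (Real.exp (-(a * τ)) • 1)) := by
  set b : ι → ℝ := fun ε => π ε ⬝ᵥ (1 - laplaceMatrix (η ε) (κ ε) (P ε) s *ᵥ 1) with hb
  have hvb : Tendsto (fun ε => v ε * b ε) l (𝓝 a) := by
    refine ha.congr' ?_
    filter_upwards [hMRP, hπ] with ε hMRP hπ
    simp only [hb]
    rw [dotProduct_sub, dotProduct_one, hπ.2, dotProduct]
    simp only [hMRP.laplaceMatrix_mulVec_one hs]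
  have hv0 : ∀ᶠ ε in l, v ε ≠ 0 := hv.eventually_ne_atTop 0
  have hb0 : Tendsto b l (𝓝 0) :=
    (hvb.div_atTop hv).congr' (hv0.mono fun ε hv0 => mul_div_cancel_left₀ (b ε) hv0)
  have hcb : Tendsto (fun ε => c ε * b ε) l (𝓝 (a * τ)) := by
    refine (hvb.mul hc).congr' (hv0.mono fun ε hv0 => ?_)
    field_simp
  have hle : ∀ᶠ ε in l, ∀ i j, laplaceMatrix (η ε) (κ ε) (P ε) s i j ≤ p ε i j := by
    filter_upwards [hMRP, hp] with ε hMRP hp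
    exact hp ▸ hMRP.laplaceMatrix_le hs
  have hstoch : ∀ᶠ ε in l, p ε ∈ rowStochastic ℝ X := by
    filter_upwards [hMRP, hp] with ε hMRP hp
    exact hp ▸ hMRP.laplaceMatrix_zero_mem_rowStochastic
  obtain ⟨δ, hδ, hedge⟩ := exists_eventually_mem_stochasticWithEdges hstoch
  exact tendsto_pow_mulVec_one hδ hconn hedge (.of_forall fun ε => laplaceMatrix_nonneg s) hle hπ
    hstat hb0 hcb

theorem stmt5_general (hMRP : ∀ᶠ ε in l, IsMarkovRenewalProcess (Q ε) (η ε) (κ ε) (P ε))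
    (hp : ∀ᶠ ε in l, ∀ i j, p ε i j = (P ε i).real (η ε 1 ⁻¹' {j}))
    (hconn : ∀ x y, ReflTransGen (fun i j => 0 < liminf (fun ε => p ε i j) l) x y)
    (hπ : ∀ᶠ ε in l, π ε ∈ stdSimplex ℝ X) (hstat : ∀ᶠ ε in l, π ε ᵥ* p ε = π ε)
    {q : ι → X → ℝ} (hq : ∀ᶠ ε in l, q ε ∈ stdSimplex ℝ X) {Pq : ι → Measure Ω}
    (hmix : ∀ᶠ ε in l, Pq ε = ∑ i, ENNReal.ofReal (q ε i) • P ε i)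
    (hv : Tendsto v l atTop) {A : ℝ → ℝ}
    (hA : ∀ s > 0, Tendsto
      (fun ε => v ε * (1 - ∑ i, π ε i * ∫ ω, Real.exp (-(s * κ ε 1 ω)) ∂(P ε i))) l (𝓝 (A s)))
    (hA0 : A 0 = 0) {n : ℕ} {t : ℕ → ℝ} (ht0 : t 0 = 0) (ht : MonotoneOn t (Iic n)) {s : ℕ → ℝ}
    (hs : ∀ r, 0 ≤ s r) :
    Tendsto (fun ε => ∫ ω, Real.exp (-∑ r ∈ Finset.range n,
        s r * (∑ k ∈ Finset.range ⌊t (r + 1) * v ε⌋₊, κ ε (k + 1) ω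
          - ∑ k ∈ Finset.range ⌊t r * v ε⌋₊, κ ε (k + 1) ω)) ∂(Pq ε)) l
      (𝓝 (Real.exp (-∑ r ∈ Finset.range n, A (s r) * (t (r + 1) - t r)))) := by
  classical
  let c (r : ℕ) (ε : ι) : ℕ := ⌊t (r + 1) * v ε⌋₊ - ⌊t r * v ε⌋₊
  have hp0 : ∀ᶠ ε in l, p ε = laplaceMatrix (η ε) (κ ε) (P ε) 0 := hp.mono fun ε hp =>
    Matrix.ext fun i j => (hp i j).trans (laplaceMatrix_zero_apply i j).symm
  have hA' (u : ℝ) (hu : 0 ≤ u) : Tendsto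
      (fun ε => v ε * (1 - ∑ i, π ε i * ∫ ω, Real.exp (-(u * κ ε 1 ω)) ∂(P ε i))) l (𝓝 (A u)) := by
    rcases hu.eq_or_lt with rfl | hu
    · refine hA0.symm ▸ (tendsto_congr' ?_).2 tendsto_const_nhds
      filter_upwards [hMRP, hπ] with ε hMRP hπ
      have := hMRP.isProbabilityMeasure
      simp [hπ.2]
    · exact hA u hu
  have hblock (r : ℕ) (hr : r < n) :
      Tendsto (fun ε => laplaceMatrix (η ε) (κ ε) (P ε) (s r) ^ c r ε *ᵥ 1) l
        (𝓝 (Real.exp (-(A (s r) * (t (r + 1) - t r))) • 1)) :=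
    tendsto_laplaceMatrix_pow_mulVec_one hMRP hp0 hconn hπ hstat hv (hs r) (hA' _ (hs r))
      (tendsto_natFloor_sub_natFloor_div hv
        (ht0 ▸ ht (mem_Iic.2 n.zero_le) (mem_Iic.2 hr.le) r.zero_le)
        (ht (mem_Iic.2 hr.le) (mem_Iic.2 hr) r.le_succ))
  have hnorm (r : ℕ) (_ : r < n) :
      ∀ᶠ ε in l, ‖laplaceMatrix (η ε) (κ ε) (P ε) (s r) ^ c r ε‖ ≤ 1 :=
    hMRP.mono fun ε h => h.norm_laplaceMatrix_pow_le_one (hs r) _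
  have hlim := tendsto_dotProduct_of_tendsto_smul_one hq (tendsto_prod_mulVec_one hnorm hblock)
  rw [← Finset.sum_neg_distrib, Real.exp_sum]
  refine hlim.congr' ?_
  filter_upwards [hMRP, hq, hmix, hv.eventually_ge_atTop 0] with ε hMRP hq hmix hv
  rw [hmix]
  exact (hMRP.integral_exp_neg_block hq.1 (N := fun r => ⌊t r * v ε⌋₊) (by simp [ht0])
    (fun i hi j hj hij => Nat.floor_mono (mul_le_mul_of_nonneg_right (ht hi hj hij) hv)) hs).symm

end FiniteDimensionalDistributions

section RingChain

open Relation

lemma reflTransGen_of_cycle {X : Type*} {E : X → X → Prop} {N : ℕ} {c : ℕ → X} (hc : c N = c 0)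
    (hsurj : ∀ i, ∃ k ≤ N, c k = i) (hE : ∀ k < N, E (c k) (c (k + 1))) (x y : X) :
    ReflTransGen E x y := by
  have hpath {a b : ℕ} (hab : a ≤ b) (hb : b ≤ N) : ReflTransGen E (c a) (c b) := by
    induction b, hab using Nat.le_induction with
    | base => exact .refl
    | succ b _ ih => exact (ih (by lia)).tail (hE b hb)
  obtain ⟨a, ha, rfl⟩ := hsurj x
  obtain ⟨b, hb, rfl⟩ := hsurj y
  exact (hpath ha le_rfl).trans (hc ▸ hpath b.zero_le hb)

lemma CondB.reflTransGen {m : ℕ} {p : ℝ → Fin m → Fin m → ℝ} (hB : CondB p) (x y : Fin m) :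
    ReflTransGen (fun i j => 0 < liminf (fun ε => p ε i j) (𝓝[>] 0)) x y := by
  obtain ⟨N, _, c, hc, hsurj, hE⟩ := hB
  exact reflTransGen_of_cycle hc hsurj hE x y

end RingChain

lemma IsStationaryDist.vecMul_eq {m : ℕ} {p : Matrix (Fin m) (Fin m) ℝ} {π : Fin m → ℝ}
    (h : IsStationaryDist p π) : Matrix.vecMul π p = π :=
  (funext h.2.2).symm

lemma sum_Icc_one_eq_sum_range {M : Type*} [AddCommMonoid M] (f : ℕ → M) (n : ℕ) :
    ∑ k ∈ Finset.Icc 1 n, f k = ∑ k ∈ Finset.range n, f (k + 1) := by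
  rw [Finset.range_eq_Ico, Finset.sum_Ico_add' f 0 n 1, zero_add, Finset.Ico_add_one_right_eq_Icc]

/-- Theorem 2 (iii): under conditions B and D₁ the step-sum reward processes
`κ_ε(·)` converge in finite-dimensional distributions to a nonnegative Lévy process with
Laplace transforms `E e^{−sθ₀(t)} = e^{−tA(s)}`. -/
theorem stmt5 {m : ℕ} (hm : 0 < m) (ε₀ : ℝ) (hε₀ : 0 < ε₀)
    {Ω : Type} [MeasurableSpace Ω]
    (η : ℝ → ℕ → Ω → Fin m) (κ : ℝ → ℕ → Ω → ℝ)
    (Pstart : ℝ → Fin m → Measure Ω)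
    (hprob : ∀ ε i, IsProbabilityMeasure (Pstart ε i))
    (hmeas : ∀ ε n, Measurable (η ε n) ∧ Measurable (κ ε n))
    (hκnn : ∀ ε n ω, 0 ≤ κ ε n ω)
    (Q : ℝ → Fin m → Fin m → ℝ → ℝ)
    (hMRP : ∀ ε ∈ Ioc (0:ℝ) ε₀, ∀ n : ℕ, ∀ I : ℕ → Fin m, ∀ T : ℕ → ℝ,
      Pstart ε (I 0) {ω | ∀ k ≤ n, (η ε k ω = I k ∧ (1 ≤ k → κ ε k ω ≤ T k))}
        = ENNReal.ofReal (∏ k ∈ Finset.Icc 1 n, Q ε (I (k - 1)) (I k) (T k)))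
    (p : ℝ → Fin m → Fin m → ℝ)
    (hp : ∀ ε ∈ Ioc (0:ℝ) ε₀, ∀ i j, p ε i j = (Pstart ε i {ω | η ε 1 ω = j}).toReal)
    (hB : CondB p)
    (π : ℝ → Fin m → ℝ)
    (hπ : ∀ᶠ ε in 𝓝[>] (0:ℝ), IsStationaryDist (fun i j => p ε i j) (π ε))
    -- arbitrary family of initial distributions
    (q : ℝ → Fin m → ℝ) (Pq : ℝ → Measure Ω)
    (hq : ∀ ε ∈ Ioc (0:ℝ) ε₀, (∀ i, 0 ≤ q ε i) ∧ ∑ i, q ε i = 1)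
    (hmix : ∀ ε ∈ Ioc (0:ℝ) ε₀, Pq ε = ∑ i, ENNReal.ofReal (q ε i) • Pstart ε i)
    (v : ℝ → ℝ) (hvpos : ∀ ε ∈ Ioc (0:ℝ) ε₀, 0 < v ε)
    (hvinf : Tendsto v (𝓝[>] (0:ℝ)) atTop)
    -- condition D₁, together with the canonical value A(0) = 0 of the cumulant
    (A : ℝ → ℝ)
    (hD : ∀ s > 0, Tendsto
      (fun ε => v ε * (1 - ∑ i, π ε i * ∫ ω, Real.exp (-(s * κ ε 1 ω)) ∂(Pstart ε i)))
      (𝓝[>] (0:ℝ)) (𝓝 (A s)))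
    (hApos : ∀ s > 0, 0 < A s)
    (hA0 : Tendsto A (𝓝[>] (0:ℝ)) (𝓝 0))
    (hAzero : A 0 = 0) :
    ∀ n : ℕ, ∀ t : ℕ → ℝ, t 0 = 0 → (∀ r < n, t r ≤ t (r + 1)) →
    ∀ s : ℕ → ℝ, (∀ r, 0 ≤ s r) →
    Tendsto
      (fun ε => ∫ ω, Real.exp (-(∑ r ∈ Finset.Icc 1 n,
        s r * (stepSum κ v ε (t r) ω - stepSum κ v ε (t (r - 1)) ω))) ∂(Pq ε))
      (𝓝[>] (0:ℝ))
      (𝓝 (Real.exp (-(∑ r ∈ Finset.Icc 1 n, A (s r) * (t r - t (r - 1)))))) := by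
  intro n t ht0 ht s hs
  have : NeZero m := ⟨hm.ne'⟩
  have hnear {R : ℝ → Prop} (hR : ∀ ε ∈ Ioc 0 ε₀, R ε) : ∀ᶠ ε in 𝓝[>] 0, R ε :=
    eventually_of_mem (Ioc_mem_nhdsGT hε₀) hR
  have ht : MonotoneOn t (Iic n) :=
    monotoneOn_of_le_add_one ordConnected_Iic fun r _ _ hr => ht r hr
  simpa only [stepSum, sum_Icc_one_eq_sum_range, Nat.add_sub_cancel] using
    stmt5_general (hnear fun ε hε => ⟨hprob ε, fun k => (hmeas ε k).1, fun k => (hmeas ε k).2,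
      hκnn ε, hMRP ε hε⟩) (hnear hp) hB.reflTransGen (hπ.mono fun _ h => ⟨h.1, h.2.1⟩)
      (hπ.mono fun _ h => h.vecMul_eq) (hnear hq) (hnear hmix) hvinf hD hAzero ht0 ht
      fun r => hs (r + 1)
end
end

section
/- Let conditions A, B and C hold, set v_ε = p_ε^{−1}, and suppose condition D₁ holds. Then, for any family of initial distributions q̄_ε, the first-rare-event times ξ_ε converge in distribution as ε → 0 to a nonnegative random variable ξ₀ with Laplace transform E e^{−sξ₀} = 1/(1 + A(s)) for s ≥ 0; equivalently, E e^{−sξ_ε} → 1/(1 + A(s)) as ε → 0 for every s > 0. -/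
open MeasureTheory Filter Set
open scoped Topology ENNReal

noncomputable section

/-- `p_{ε,i} = P_i(ζ_{ε,1} = 1)`, the probability of occurrence of the rare event during
one transition step, starting from state `i`. -/
def rareP {m : ℕ} {Ω : Type} [MeasurableSpace Ω]
    (Pstart : ℝ → Fin m → Measure Ω) (ζ : ℝ → ℕ → Ω → Bool) (ε : ℝ) (i : Fin m) : ℝ :=
  (Pstart ε i {ω | ζ ε 1 ω = true}).toReal

/-- `p_ε = Σ_i π_{ε,i} p_{ε,i}`, the stationary average of the rare-event probabilities. -/
def avgRare {m : ℕ} {Ω : Type} [MeasurableSpace Ω]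
    (Pstart : ℝ → Fin m → Measure Ω) (ζ : ℝ → ℕ → Ω → Bool) (π : ℝ → Fin m → ℝ)
    (ε : ℝ) : ℝ :=
  ∑ i, π ε i * rareP Pstart ζ ε i

/-- `φ_ε(s) = Σ_i π_{ε,i} E_i e^{−sκ_{ε,1}}`, the stationary average of the Laplace
transforms of the sojourn times. -/
def lapPhi {m : ℕ} {Ω : Type} [MeasurableSpace Ω]
    (Pstart : ℝ → Fin m → Measure Ω) (κ : ℝ → ℕ → Ω → ℝ) (π : ℝ → Fin m → ℝ)
    (ε s : ℝ) : ℝ :=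
  ∑ i, π ε i * ∫ ω, Real.exp (-(s * κ ε 1 ω)) ∂(Pstart ε i)

/-- `ν_ε = min{n ≥ 1 : ζ_{ε,n} = 1}`, the number of steps until the first rare event. -/
def nuRE {Ω : Type} (ζ : ℝ → ℕ → Ω → Bool) (ε : ℝ) (ω : Ω) : ℕ :=
  sInf {n : ℕ | 1 ≤ n ∧ ζ ε n ω = true}

/-- `ξ_ε = Σ_{n=1}^{ν_ε} κ_{ε,n}`, the first-rare-event time. -/
def xiRE {Ω : Type} (κ : ℝ → ℕ → Ω → ℝ) (ζ : ℝ → ℕ → Ω → Bool) (ε : ℝ) (ω : Ω) : ℝ :=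
  ∑ n ∈ Finset.Icc 1 (nuRE ζ ε ω), κ ε n ω

/-!
Conditioning on the first transition gives the renewal equation `Ψ = a Ψ + b` for
`Ψ i = E_i[exp (-s ξ); the rare event occurs]`, where `a i j = E_i[exp (-s κ₁); η₁ = j, ζ₁ = 0]` and
`b i = E_i[exp (-s κ₁); ζ₁ = 1]`. The deficit `max Ψ - Ψ` is superharmonic for the embedded chain up
to an error `∑ b`, so a Harnack inequality along the ring chain of condition B bounds the
oscillation of `Ψ` by a constant multiple of `∑ b → 0`. Integrating against the stationary
distribution then shows that `Ψ` is asymptotically `V / U`, where `V = ∑ π b` and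
`U = ∑ π (1 - ∑ a) = V + 1 - φ(s)`. Conditions A and C give `V ∼ p_ε`, and D₁ gives
`U ∼ p_ε (1 + A(s))`. The case `s = 0` shows that the probability of the rare event ever occurring
tends to `1`. Since `A(0+) = 0`, the laws of the `ξ_ε` are tight, and every limit law has the
transform `1 / (1 + A)`.
-/

section Laplace

open ProbabilityTheory

variable {Ω : Type*} {mΩ : MeasurableSpace Ω} {μ : Measure Ω} {X : Ω → ℝ} {s : ℝ}

/-- The Laplace transform `∫ exp (-s X) dμ` of `X` under `μ`, i.e. the moment generating function
at `-s`. The measure may have any mass, so that the transform on an event `E` is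
`laplace X (μ.restrict E) s`. -/
def laplace (X : Ω → ℝ) (μ : Measure Ω) (s : ℝ) : ℝ := mgf X μ (-s)

theorem laplace_eq_integral (X : Ω → ℝ) (μ : Measure Ω) (s : ℝ) :
    laplace X μ s = ∫ ω, Real.exp (-(s * X ω)) ∂μ := by
  simp only [laplace, mgf, neg_mul]

theorem laplace_id_map (hX : AEMeasurable X μ) (s : ℝ) : laplace id (μ.map X) s = laplace X μ s :=
  congrFun (mgf_id_map hX) (-s)

theorem exp_neg_mul_le_one {x : ℝ} (hs : 0 ≤ s) (hx : 0 ≤ x) : Real.exp (-(s * x)) ≤ 1 :=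
  Real.exp_le_one_iff.2 (neg_nonpos.2 (mul_nonneg hs hx))

theorem integrable_exp_neg_mul [IsFiniteMeasure μ] (hX : AEMeasurable X μ) (hX0 : 0 ≤ᵐ[μ] X)
    (hs : 0 ≤ s) : Integrable (fun ω => Real.exp (-(s * X ω))) μ := by
  refine (integrable_const (1 : ℝ)).mono' (by fun_prop) ?_
  filter_upwards [hX0] with ω hω
  simpa only [Real.norm_eq_abs, Real.abs_exp] using exp_neg_mul_le_one hs hω

theorem laplace_le_measureReal_univ [IsFiniteMeasure μ] (hX : AEMeasurable X μ) (hX0 : 0 ≤ᵐ[μ] X)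
    (hs : 0 ≤ s) : laplace X μ s ≤ μ.real univ := by
  rw [laplace_eq_integral, ← mul_one (μ.real univ), ← smul_eq_mul, ← integral_const]
  refine integral_mono_ae (integrable_exp_neg_mul hX hX0 hs) (integrable_const 1) ?_
  filter_upwards [hX0] with ω hω using exp_neg_mul_le_one hs hω

theorem measureReal_univ_sub_laplace_eq [IsFiniteMeasure μ] (hX : AEMeasurable X μ)
    (hX0 : 0 ≤ᵐ[μ] X) (hs : 0 ≤ s) :
    μ.real univ - laplace X μ s = ∫ ω, (1 - Real.exp (-(s * X ω))) ∂μ := by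
  rw [integral_sub (integrable_const 1) (integrable_exp_neg_mul hX hX0 hs), integral_const,
    smul_eq_mul, mul_one, laplace_eq_integral]

theorem measureReal_univ_sub_laplace_le [IsFiniteMeasure μ] (hX : Measurable X)
    (hX0 : 0 ≤ᵐ[μ] X) (hs : 0 ≤ s) {δ : ℝ} (hδ : 0 ≤ δ) :
    μ.real univ - laplace X μ s ≤ s * δ * μ.real univ + μ.real {ω | δ < X ω} := by
  have hmeas : MeasurableSet {ω | δ < X ω} := measurableSet_lt measurable_const hX
  have hpoint : ∀ ω, 1 - Real.exp (-(s * X ω)) ≤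
      s * δ + {ω | δ < X ω}.indicator (fun _ => (1 : ℝ)) ω := fun ω => by
    by_cases h : δ < X ω
    · rw [indicator_of_mem (by exact h)]
      have := mul_nonneg hs hδ
      linarith [Real.exp_pos (-(s * X ω))]
    · rw [indicator_of_notMem (by exact h)]
      have := mul_le_mul_of_nonneg_left (not_lt.1 h) hs
      linarith [Real.add_one_le_exp (-(s * X ω))]
  have hind : Integrable ({ω | δ < X ω}.indicator (fun _ => (1 : ℝ))) μ :=
    (integrable_const 1).indicator hmeas
  calc μ.real univ - laplace X μ s
      = ∫ ω, (1 - Real.exp (-(s * X ω))) ∂μ :=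
        measureReal_univ_sub_laplace_eq hX.aemeasurable hX0 hs
    _ ≤ ∫ ω, (s * δ + {ω | δ < X ω}.indicator (fun _ => (1 : ℝ)) ω) ∂μ :=
        integral_mono ((integrable_const 1).sub
          (integrable_exp_neg_mul hX.aemeasurable hX0 hs)) ((integrable_const _).add hind) hpoint
    _ = s * δ * μ.real univ + μ.real {ω | δ < X ω} := by
        rw [integral_add (integrable_const _) hind, integral_const, integral_indicator_const _
          hmeas, smul_eq_mul, smul_eq_mul, mul_one, mul_comm]

theorem one_sub_exp_mul_measureReal_lt_le [IsFiniteMeasure μ] (hX : AEMeasurable X μ)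
    (hX0 : 0 ≤ᵐ[μ] X) {r : ℝ} (hr : 0 < r) :
    (1 - Real.exp (-1)) * μ.real {ω | r < X ω} ≤ μ.real univ - laplace X μ r⁻¹ := by
  have hr' : 0 ≤ r⁻¹ := (inv_pos.2 hr).le
  have hsub : {ω | r < X ω} ⊆ {ω | 1 - Real.exp (-1) ≤ 1 - Real.exp (-(r⁻¹ * X ω))} := by
    intro ω (hω : r < X ω)
    have : 1 ≤ r⁻¹ * X ω := by
      rw [inv_mul_eq_div, le_div_iff₀ hr, one_mul]
      exact hω.le
    exact sub_le_sub_left (Real.exp_le_exp.2 (neg_le_neg this)) 1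
  have hnonneg : 0 ≤ᵐ[μ] fun ω => 1 - Real.exp (-(r⁻¹ * X ω)) := by
    filter_upwards [hX0] with ω hω using sub_nonneg.2 (exp_neg_mul_le_one hr' hω)
  have hc : (0 : ℝ) ≤ 1 - Real.exp (-1) := sub_nonneg.2 (Real.exp_le_one_iff.2 (by norm_num))
  calc (1 - Real.exp (-1)) * μ.real {ω | r < X ω}
      ≤ (1 - Real.exp (-1)) * μ.real {ω | 1 - Real.exp (-1) ≤ 1 - Real.exp (-(r⁻¹ * X ω))} :=
        mul_le_mul_of_nonneg_left (measureReal_mono hsub) hc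
    _ ≤ ∫ ω, (1 - Real.exp (-(r⁻¹ * X ω))) ∂μ :=
        mul_meas_ge_le_integral_of_nonneg hnonneg
          ((integrable_const 1).sub (integrable_exp_neg_mul hX hX0 hr')) _
    _ = μ.real univ - laplace X μ r⁻¹ := (measureReal_univ_sub_laplace_eq hX hX0 hr').symm

theorem ae_nonneg_iff_measure_Iio_eq_zero {ν : Measure ℝ} : 0 ≤ᵐ[ν] id ↔ ν (Iio 0) = 0 := by
  simp only [EventuallyLE, ae_iff, Pi.zero_apply, id_eq, not_le]
  rfl

theorem isTightMeasureSet_range_of_tendsto_laplace {ν : ℕ → Measure ℝ}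
    [∀ n, IsProbabilityMeasure (ν n)] (hν : ∀ n, 0 ≤ᵐ[ν n] id) {F : ℝ → ℝ}
    (hF : ∀ s > 0, Tendsto (fun n => laplace id (ν n) s) atTop (𝓝 (F s)))
    (hF0 : Tendsto F (𝓝[>] 0) (𝓝 1)) : IsTightMeasureSet (range ν) := by
  set c : ℝ := 1 - Real.exp (-1)
  have hc : 0 < c := sub_pos.2 (Real.exp_lt_one_iff.2 (by norm_num))
  have hbound : ∀ r > 0, ∀ n, ν n {x | r < ‖x‖} ≤
      ENNReal.ofReal ((1 - laplace id (ν n) r⁻¹) / c) := fun r hr n => by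
    have hnorm : {x : ℝ | r < ‖x‖} =ᵐ[ν n] {x | r < id x} := by
      filter_upwards [hν n] with x hx
      exact propext (iff_of_eq (congrArg (r < ·) (Real.norm_of_nonneg hx)))
    rw [measure_congr hnorm, ← ofReal_measureReal]
    refine ENNReal.ofReal_le_ofReal ((le_div_iff₀' hc).2 ?_)
    simpa only [probReal_univ] using
      one_sub_exp_mul_measureReal_lt_le measurable_id.aemeasurable (hν n) hr
  have hlim : Tendsto (fun r : ℝ => ENNReal.ofReal ((1 - F r⁻¹) / c)) atTop (𝓝 0) := by
    have := ENNReal.tendsto_ofReal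
      (((hF0.comp tendsto_inv_atTop_nhdsGT_zero).const_sub 1).div_const c)
    simpa only [sub_self, zero_div, ENNReal.ofReal_zero, Function.comp_apply] using this
  refine isTightMeasureSet_range_of_tendsto_limsup_measure_norm_gt
    (tendsto_of_tendsto_of_tendsto_of_le_of_le' tendsto_const_nhds hlim
      (Eventually.of_forall fun _ => zero_le) ?_)
  filter_upwards [eventually_gt_atTop 0] with r hr
  rw [← (ENNReal.tendsto_ofReal (((hF _ (inv_pos.2 hr)).const_sub 1).div_const c)).limsup_eq]
  exact limsup_le_limsup (Eventually.of_forall (hbound r hr))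

theorem ae_nonneg_of_tendsto {μ : ProbabilityMeasure ℝ} {ν : ℕ → ProbabilityMeasure ℝ}
    (h : Tendsto ν atTop (𝓝 μ)) (hν : ∀ n, 0 ≤ᵐ[(ν n : Measure ℝ)] id) :
    0 ≤ᵐ[(μ : Measure ℝ)] id := by
  have := ProbabilityMeasure.le_liminf_measure_open_of_tendsto h (isOpen_Iio (a := (0 : ℝ)))
  simp only [ae_nonneg_iff_measure_Iio_eq_zero.1 (hν _), liminf_const] at this
  exact ae_nonneg_iff_measure_Iio_eq_zero.2 (nonpos_iff_eq_zero.1 this)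

theorem tendsto_laplace_of_tendsto {μ : ProbabilityMeasure ℝ} {ν : ℕ → ProbabilityMeasure ℝ}
    (h : Tendsto ν atTop (𝓝 μ)) (hν : ∀ n, 0 ≤ᵐ[(ν n : Measure ℝ)] id) (hs : 0 ≤ s) :
    Tendsto (fun n => laplace id (ν n : Measure ℝ) s) atTop (𝓝 (laplace id (μ : Measure ℝ) s)) := by
  -- `exp (-s x)` is unbounded on the negative half-line, hence the truncation by `max x 0`
  have hbound : ∀ x : ℝ, ‖Real.exp (-(s * max x 0))‖ ≤ 1 := fun x => by
    simpa only [Real.norm_eq_abs, Real.abs_exp] using exp_neg_mul_le_one hs (le_max_right x 0)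
  have heq : ∀ {ρ : Measure ℝ}, 0 ≤ᵐ[ρ] id →
      ∫ x, Real.exp (-(s * max x 0)) ∂ρ = laplace id ρ s := fun hρ => by
    rw [laplace_eq_integral]
    refine integral_congr_ae ?_
    filter_upwards [hρ] with x hx
    rw [max_eq_left (by exact hx), id_eq]
  have := ProbabilityMeasure.tendsto_iff_forall_integral_tendsto.1 h
    (BoundedContinuousFunction.ofNormedAddCommGroup
      (fun x => Real.exp (-(s * max x 0))) (by fun_prop) 1 hbound)
  simpa only [BoundedContinuousFunction.coe_ofNormedAddCommGroup, heq (hν _),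
    heq (ae_nonneg_of_tendsto h hν)] using this

theorem exists_laplace_eq_of_tendsto_atTop {ν : ℕ → Measure ℝ}
    [hprob : ∀ n, IsProbabilityMeasure (ν n)] (hν : ∀ n, 0 ≤ᵐ[ν n] id) {F : ℝ → ℝ}
    (hF : ∀ s > 0, Tendsto (fun n => laplace id (ν n) s) atTop (𝓝 (F s)))
    (hF0 : Tendsto F (𝓝[>] 0) (𝓝 1)) :
    ∃ μ : Measure ℝ, IsProbabilityMeasure μ ∧ 0 ≤ᵐ[μ] id ∧ ∀ s > 0, laplace id μ s = F s := by
  let V : ℕ → ProbabilityMeasure ℝ := fun n => ⟨ν n, hprob n⟩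
  have hcompact : IsCompact (closure (range V)) := by
    refine isCompact_closure_of_isTightMeasureSet ?_
    have hrange : {x | ∃ ρ ∈ range V, (ρ : Measure ℝ) = x} = range ν := by
      ext ρ
      rw [mem_ofPred_eq, exists_range_iff]
      rfl
    rw [hrange]
    exact isTightMeasureSet_range_of_tendsto_laplace hν hF hF0
  obtain ⟨μ, -, φ, hφ, hlim⟩ :=
    hcompact.tendsto_subseq (x := V) fun n => subset_closure (mem_range_self n)
  refine ⟨μ, μ.2, ae_nonneg_of_tendsto hlim fun n => hν (φ n), fun s hs => ?_⟩
  exact tendsto_nhds_unique (tendsto_laplace_of_tendsto hlim (fun n => hν (φ n)) hs.le)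
    ((hF s hs).comp hφ.tendsto_atTop)

theorem exists_laplace_eq_of_tendsto {ι : Type*} {l : Filter ι} [l.NeBot] [l.IsCountablyGenerated]
    {ν : ι → Measure ℝ} (hprob : ∀ᶠ x in l, IsProbabilityMeasure (ν x))
    (hν : ∀ᶠ x in l, 0 ≤ᵐ[ν x] id) {F : ℝ → ℝ}
    (hF : ∀ s > 0, Tendsto (fun x => laplace id (ν x) s) l (𝓝 (F s)))
    (hF0 : Tendsto F (𝓝[>] 0) (𝓝 1)) :
    ∃ μ : Measure ℝ, IsProbabilityMeasure μ ∧ 0 ≤ᵐ[μ] id ∧ ∀ s > 0, laplace id μ s = F s := by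
  obtain ⟨x, hx, h⟩ := exists_seq_forall_of_frequently (hprob.and hν).frequently
  have := fun n => (h n).1
  exact exists_laplace_eq_of_tendsto_atTop (fun n => (h n).2) (fun s hs => (hF s hs).comp hx) hF0

end Laplace

section Cylinders

open MeasurableSpace

variable {E : Type*} [MeasurableSpace E]

theorem ext_of_prefix_cylinders {C : Set (Set E)} (hgen : generateFrom C = ‹MeasurableSpace E›)
    (hpi : IsPiSystem C) (hspan : IsCountablySpanning C) {μ ν : Measure (ℕ → E)}
    [IsFiniteMeasure μ] [IsFiniteMeasure ν]
    (h : ∀ n (B : ℕ → Set E), (∀ k, B k ∈ C) →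
      μ {y | ∀ k ≤ n, y k ∈ B k} = ν {y | ∀ k ≤ n, y k ∈ B k}) : μ = ν := by
  have hprefix : ∀ n, μ.map (Finset.Iic n).restrict = ν.map (Finset.Iic n).restrict := fun n => by
    obtain ⟨B, hB, hBuniv⟩ := IsCountablySpanning.pi fun _ : Finset.Iic n => hspan
    refine Measure.ext_of_generateFrom_of_iUnion _ B
      (generateFrom_eq_pi (fun _ => hgen) fun _ => hspan).symm (IsPiSystem.pi fun _ => hpi)
      hBuniv hB (fun _ => measure_ne_top _ _) ?_
    rintro _ ⟨D, hD, rfl⟩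
    have hDmeas : ∀ k, MeasurableSet (D k) := fun k =>
      hgen ▸ measurableSet_generateFrom (hD k (mem_univ k))
    obtain ⟨D₀, hD₀⟩ : C.Nonempty := ⟨_, (hD ⟨n, by simp⟩ (mem_univ _))⟩
    have hpre : (Finset.Iic n).restrict ⁻¹' univ.pi D = {y : ℕ → E | ∀ k ≤ n, y k ∈
        if hk : k ≤ n then D ⟨k, Finset.mem_Iic.2 hk⟩ else D₀} := by
      ext y
      simp only [mem_preimage, mem_univ_pi, Subtype.forall, Finset.mem_Iic, Finset.restrict_def,
        mem_ofPred_eq]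
      exact forall₂_congr fun k hk => by rw [dif_pos hk]
    rw [Measure.map_apply (by fun_prop) (.univ_pi hDmeas),
      Measure.map_apply (by fun_prop) (.univ_pi hDmeas), hpre]
    refine h n _ fun k => ?_
    split_ifs with hk
    exacts [hD _ (mem_univ _), hD₀]
  refine IsProjectiveLimit.unique (P := fun I => ν.map I.restrict) (fun I => ?_) fun I => rfl
  have hI : I ⊆ Finset.Iic (I.sup id) := fun k hk => Finset.mem_Iic.2 (Finset.le_sup (f := id) hk)
  simp only [← Finset.restrict₂_comp_restrict hI]
  have hmeas := Finset.measurable_restrict₂ (X := fun _ => E) hI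
  rw [← Measure.map_map hmeas (by fun_prop), hprefix, Measure.map_map hmeas (by fun_prop)]

theorem isPiSystem_range_singleton (α : Type*) : IsPiSystem (range ({·} : α → Set α)) := by
  rintro _ ⟨a, rfl⟩ _ ⟨b, rfl⟩ ⟨x, rfl, rfl⟩
  exact ⟨x, (inter_self _).symm⟩

theorem isCountablySpanning_range_singleton (α : Type*) [Countable α] [Nonempty α] :
    IsCountablySpanning (range ({·} : α → Set α)) := by
  obtain ⟨f, hf⟩ := exists_surjective_nat α
  exact ⟨fun n => {f n}, fun n => mem_range_self _, iUnion_eq_univ_iff.2 fun a => (hf a).imp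
    fun _ h => h.symm⟩

theorem generateFrom_range_singleton (α : Type*) [Countable α] [hα : MeasurableSpace α]
    [MeasurableSingletonClass α] : generateFrom (range ({·} : α → Set α)) = hα := by
  refine le_antisymm (generateFrom_le ?_) fun s _ => ?_
  · rintro _ ⟨a, rfl⟩
    exact measurableSet_singleton a
  · rw [← biUnion_of_singleton s]
    exact .biUnion s.to_countable fun a _ => measurableSet_generateFrom (mem_range_self a)

theorem isCountablySpanning_range_Iic : IsCountablySpanning (range (Iic : ℝ → Set ℝ)) :=
  ⟨fun n => Iic (n : ℝ), fun _ => mem_range_self _, iUnion_eq_univ_iff.2 fun x => exists_nat_ge x⟩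

/-- Prepend a term to a sequence. -/
def consSeq {α : Type*} (x : α) (y : ℕ → α) : ℕ → α
  | 0 => x
  | n + 1 => y n

theorem measurable_consSeq : Measurable fun xy : E × (ℕ → E) => consSeq xy.1 xy.2 := by
  refine measurable_pi_lambda _ fun n => ?_
  cases n with
  | zero => exact measurable_fst
  | succ n => exact (measurable_pi_apply n).comp measurable_snd

end Cylinders

section MarkovRenewal

open MeasurableSpace ProbabilityTheory

/-- The outcome of one transition of a Markov renewal process: the state reached, the sojourn time
and the mark telling whether the rare event occurred. -/
abbrev Transition (S : Type*) := S × ℝ × Bool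

variable {S Ω : Type*}

/-- The event that a transition leads to the state `x.1` in time at most `x.2.1` with mark
`x.2.2`. -/
def transitionBox (x : Transition S) : Set (Transition S) := {x.1} ×ˢ Iic x.2.1 ×ˢ {x.2.2}

theorem mem_transitionBox {x y : Transition S} :
    y ∈ transitionBox x ↔ y.1 = x.1 ∧ y.2.1 ≤ x.2.1 ∧ y.2.2 = x.2.2 := Iff.rfl

theorem range_transitionBox : range (transitionBox (S := S)) =
    image2 (· ×ˢ ·) (range ({·} : S → Set S))
      (image2 (· ×ˢ ·) (range Iic) (range ({·} : Bool → Set Bool))) := by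
  refine Subset.antisymm ?_ ?_
  · rintro _ ⟨x, rfl⟩
    exact mem_image2_of_mem (mem_range_self _)
      (mem_image2_of_mem (mem_range_self _) (mem_range_self _))
  · rintro _ ⟨_, ⟨i, rfl⟩, _, ⟨_, ⟨t, rfl⟩, _, ⟨z, rfl⟩, rfl⟩, rfl⟩
    exact ⟨(i, t, z), rfl⟩

theorem measurableSet_transitionBox [MeasurableSpace S] [MeasurableSingletonClass S]
    (x : Transition S) : MeasurableSet (transitionBox x) :=
  (measurableSet_singleton _).prod (measurableSet_Iic.prod (measurableSet_singleton _))

theorem measurableSet_forall_lt_mem_transitionBox [MeasurableSpace S] [MeasurableSingletonClass S]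
    (n : ℕ) (x : ℕ → Transition S) :
    MeasurableSet {y : ℕ → Transition S | ∀ k < n, y k ∈ transitionBox (x k)} := by
  simp only [ofPred_forall]
  exact .iInter fun k => .iInter fun _ => measurable_pi_apply k (measurableSet_transitionBox _)

theorem isPiSystem_range_transitionBox : IsPiSystem (range (transitionBox (S := S))) := by
  rw [range_transitionBox]
  exact (isPiSystem_range_singleton S).prod
    ((isPiSystem_Iic (α := ℝ)).prod (isPiSystem_range_singleton Bool))

theorem isCountablySpanning_range_transitionBox [Countable S] [Nonempty S] :
    IsCountablySpanning (range (transitionBox (S := S))) := by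
  rw [range_transitionBox]
  exact (isCountablySpanning_range_singleton S).prod
    (isCountablySpanning_range_Iic.prod (isCountablySpanning_range_singleton Bool))

theorem generateFrom_range_transitionBox [Countable S] [Nonempty S]
    [MeasurableSpace S] [MeasurableSingletonClass S] :
    generateFrom (range (transitionBox (S := S))) = Prod.instMeasurableSpace := by
  rw [range_transitionBox]
  have hIic : generateFrom (range (Iic : ℝ → Set ℝ)) = borel ℝ :=
    (borel_eq_generateFrom_Iic ℝ).symm
  exact generateFrom_eq_prod (generateFrom_range_singleton S)
    (generateFrom_eq_prod (hIic.trans (BorelSpace.measurable_eq (α := ℝ)).symm)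
      (generateFrom_range_singleton Bool) isCountablySpanning_range_Iic
      (isCountablySpanning_range_singleton Bool))
    (isCountablySpanning_range_singleton S)
    (isCountablySpanning_range_Iic.prod (isCountablySpanning_range_singleton Bool))

/-- The transitions `1, 2, …` of the process, indexed from `0`. -/
def path (η : ℕ → Ω → S) (κ : ℕ → Ω → ℝ) (ζ : ℕ → Ω → Bool) (ω : Ω) : ℕ → Transition S :=
  fun n => (η (n + 1) ω, κ (n + 1) ω, ζ (n + 1) ω)

variable [MeasurableSpace S] [MeasurableSpace Ω]

/-- `(η, κ, ζ)` is, under the laws `P i`, a Markov renewal process started at `i` with transition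
probabilities `Q i j t z` of moving from `i` to `j` in time at most `t` with mark `z`. -/
structure IsMarkovRenewal (P : S → Measure Ω) (η : ℕ → Ω → S) (κ : ℕ → Ω → ℝ) (ζ : ℕ → Ω → Bool)
    (Q : S → S → ℝ → Bool → ℝ) : Prop where
  isProbabilityMeasure : ∀ i, IsProbabilityMeasure (P i)
  measurable_state : ∀ n, Measurable (η n)
  measurable_sojourn : ∀ n, Measurable (κ n)
  measurable_mark : ∀ n, Measurable (ζ n)
  sojourn_nonneg : ∀ n ω, 0 ≤ κ n ω
  measure_cylinder : ∀ (n : ℕ) (I : ℕ → S) (T : ℕ → ℝ) (Z : ℕ → Bool),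
    P (I 0) {ω | ∀ k ≤ n, (η k ω = I k ∧ (1 ≤ k → (κ k ω ≤ T k ∧ ζ k ω = Z k)))} =
      ENNReal.ofReal (∏ k ∈ Finset.Icc 1 n, Q (I (k - 1)) (I k) (T k) (Z k))

namespace IsMarkovRenewal

variable {P : S → Measure Ω} {η : ℕ → Ω → S} {κ : ℕ → Ω → ℝ} {ζ : ℕ → Ω → Bool}
  {Q : S → S → ℝ → Bool → ℝ}

theorem measurable_path (h : IsMarkovRenewal P η κ ζ Q) : Measurable (path η κ ζ) :=
  measurable_pi_lambda _ fun _ => (h.measurable_state _).prodMk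
    ((h.measurable_sojourn _).prodMk (h.measurable_mark _))

variable [MeasurableSingletonClass S]

theorem ae_state_zero_eq (h : IsMarkovRenewal P η κ ζ Q) (i : S) : ∀ᵐ ω ∂P i, η 0 ω = i := by
  have := h.isProbabilityMeasure i
  have hmeas : MeasurableSet {ω | η 0 ω = i} :=
    h.measurable_state 0 (measurableSet_singleton i)
  refine (prob_compl_eq_zero_iff hmeas).2 ?_
  simpa using h.measure_cylinder 0 (fun _ => i) 0 fun _ => false

theorem measure_path_mem_box_eq_ofReal (h : IsMarkovRenewal P η κ ζ Q) (i : S) (n : ℕ)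
    (x : ℕ → Transition S) : P i {ω | ∀ k < n, path η κ ζ ω k ∈ transitionBox (x k)} =
      ENNReal.ofReal (∏ k ∈ Finset.range n,
        Q (consSeq i (fun k => (x k).1) k) (x k).1 (x k).2.1 (x k).2.2) := by
  have hcyl := h.measure_cylinder n (consSeq i fun k => (x k).1) (consSeq 0 fun k => (x k).2.1)
    (consSeq false fun k => (x k).2.2)
  rw [← Finset.Ico_add_one_right_eq_Icc, Finset.prod_Ico_eq_prod_range, Nat.add_sub_cancel] at hcyl
  simp only [Nat.add_comm 1, Nat.add_sub_cancel] at hcyl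
  refine (measure_congr ?_).trans hcyl
  filter_upwards [h.ae_state_zero_eq i] with ω hω
  refine propext ⟨fun hbox k hk => ?_, fun hall k hk => ?_⟩
  · cases k with
    | zero => exact ⟨hω, fun hk' => absurd hk' (by norm_num)⟩
    | succ k => exact ⟨(hbox k hk).1, fun _ => (hbox k hk).2⟩
  · exact ⟨(hall (k + 1) hk).1, (hall (k + 1) hk).2 (Nat.le_add_left 1 k)⟩

theorem measure_path_mem_box_eq_prod (h : IsMarkovRenewal P η κ ζ Q) (i : S) (n : ℕ)
    (x : ℕ → Transition S) : P i {ω | ∀ k < n, path η κ ζ ω k ∈ transitionBox (x k)} =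
      ∏ k ∈ Finset.range n, P (consSeq i (fun k => (x k).1) k)
        {ω | path η κ ζ ω 0 ∈ transitionBox (x k)} := by
  have hone : ∀ j y, P j {ω | path η κ ζ ω 0 ∈ transitionBox y} =
      ENNReal.ofReal (Q j y.1 y.2.1 y.2.2) := fun j y => by
    simpa [consSeq] using h.measure_path_mem_box_eq_ofReal j 1 fun _ => y
  induction n with
  | zero => simpa using h.measure_path_mem_box_eq_ofReal i 0 x
  | succ n ih =>
    rw [Finset.prod_range_succ, ← ih, hone]
    have hn := h.measure_path_mem_box_eq_ofReal i n x
    have hn' := h.measure_path_mem_box_eq_ofReal i (n + 1) x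
    rw [Finset.prod_range_succ] at hn'
    set c := ∏ k ∈ Finset.range n, Q (consSeq i (fun k => (x k).1) k) (x k).1 (x k).2.1 (x k).2.2
    -- `Q` is not assumed nonnegative: if `c < 0` then both cylinders are null
    rcases le_total 0 c with hc | hc
    · rw [hn', hn, ENNReal.ofReal_mul hc]
    · rw [hn, ENNReal.ofReal_of_nonpos hc, zero_mul]
      rw [ENNReal.ofReal_of_nonpos hc] at hn
      exact measure_mono_null (fun ω hω k (hk : k < n) => hω k (hk.trans n.lt_succ_self)) hn

theorem measure_path_mem_box_succ (h : IsMarkovRenewal P η κ ζ Q) (i : S) (n : ℕ)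
    (x : ℕ → Transition S) : P i {ω | ∀ k < n + 1, path η κ ζ ω k ∈ transitionBox (x k)} =
      P i {ω | path η κ ζ ω 0 ∈ transitionBox (x 0)} *
        P (x 0).1 {ω | ∀ k < n, path η κ ζ ω k ∈ transitionBox (x (k + 1))} := by
  rw [h.measure_path_mem_box_eq_prod i (n + 1) x, Finset.prod_range_succ', mul_comm,
    h.measure_path_mem_box_eq_prod (x 0).1 n fun k => x (k + 1)]
  refine congrArg _ (Finset.prod_congr rfl fun k _ => ?_)
  cases k <;> rfl

variable [Countable S]

/-- The laws of `path` as a kernel in the initial state. -/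
def pathKernel (P : S → Measure Ω) (η : ℕ → Ω → S) (κ : ℕ → Ω → ℝ) (ζ : ℕ → Ω → Bool) :
    Kernel S (ℕ → Transition S) :=
  Kernel.ofFunOfCountable fun i => (P i).map (path η κ ζ)

theorem pathKernel_apply (i : S) : pathKernel P η κ ζ i = (P i).map (path η κ ζ) := rfl

theorem isMarkovKernel_pathKernel (h : IsMarkovRenewal P η κ ζ Q) :
    IsMarkovKernel (pathKernel P η κ ζ) := by
  refine ⟨fun i => ?_⟩
  have := h.isProbabilityMeasure i
  exact Measure.isProbabilityMeasure_map h.measurable_path.aemeasurable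

theorem map_path_eq (h : IsMarkovRenewal P η κ ζ Q) (i : S) :
    (P i).map (path η κ ζ) =
      (((P i).map fun ω => path η κ ζ ω 0) ⊗ₘ
        (pathKernel P η κ ζ).comap Prod.fst measurable_fst).map fun xy => consSeq xy.1 xy.2 := by
  have hpath := h.measurable_path
  have hhead : Measurable fun ω => path η κ ζ ω 0 := (measurable_pi_apply 0).comp hpath
  have := h.isProbabilityMeasure i
  have := h.isMarkovKernel_pathKernel
  have := Measure.isProbabilityMeasure_map (μ := P i) hhead.aemeasurable
  have : Nonempty S := ⟨i⟩
  refine ext_of_prefix_cylinders generateFrom_range_transitionBox isPiSystem_range_transitionBox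
    isCountablySpanning_range_transitionBox fun n B hB => ?_
  choose x hx using hB
  simp only [← hx, ← Nat.lt_succ_iff]
  have htail := measurableSet_forall_lt_mem_transitionBox n fun k => x (k + 1)
  have hall := measurableSet_forall_lt_mem_transitionBox (n + 1) x
  have hpre : (fun xy : Transition S × (ℕ → Transition S) => consSeq xy.1 xy.2) ⁻¹'
      {y | ∀ k < n + 1, y k ∈ transitionBox (x k)} =
      transitionBox (x 0) ×ˢ {y | ∀ k < n, y k ∈ transitionBox (x (k + 1))} := by
    ext ⟨z, y⟩
    exact Nat.forall_lt_succ_left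
  calc (P i).map (path η κ ζ) {y | ∀ k < n + 1, y k ∈ transitionBox (x k)}
      = P i {ω | path η κ ζ ω 0 ∈ transitionBox (x 0)} *
          P (x 0).1 {ω | ∀ k < n, path η κ ζ ω k ∈ transitionBox (x (k + 1))} :=
        (Measure.map_apply hpath hall).trans (h.measure_path_mem_box_succ i n x)
    _ = ∫⁻ z in transitionBox (x 0), pathKernel P η κ ζ z.1
          {y | ∀ k < n, y k ∈ transitionBox (x (k + 1))} ∂(P i).map fun ω => path η κ ζ ω 0 := by
        rw [setLIntegral_congr_fun (measurableSet_transitionBox _)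
          fun z hz => by rw [(mem_transitionBox.1 hz).1], setLIntegral_const,
          Measure.map_apply hhead (measurableSet_transitionBox _), mul_comm, pathKernel_apply,
          Measure.map_apply hpath htail]
        rfl
    _ = _ := by
        rw [Measure.map_apply measurable_consSeq hall, hpre,
          Measure.compProd_apply_prod (measurableSet_transitionBox _) htail]
        rfl

end IsMarkovRenewal

end MarkovRenewal

section FirstRareEvent

open ProbabilityTheory

theorem measurable_sInf_nat {α : Type*} [MeasurableSpace α] {p : ℕ → α → Prop}
    (hp : ∀ n, MeasurableSet {x | p n x}) : Measurable fun x => sInf {n | p n x} := by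
  refine measurable_of_Iic fun n => ?_
  have hpre : (fun x => sInf {n | p n x}) ⁻¹' Iic n =
      (⋃ k ≤ n, {x | p k x}) ∪ ⋂ k, {x | p k x}ᶜ := by
    ext x
    simp only [mem_preimage, mem_Iic, mem_union, mem_iUnion, mem_iInter, mem_compl_iff,
      mem_ofPred_eq, exists_prop]
    constructor
    · intro hx
      by_cases hne : ∃ k, p k x
      · exact Or.inl ⟨_, hx, Nat.sInf_mem hne⟩
      · exact Or.inr (not_exists.1 hne)
    · rintro (⟨k, hk, hx⟩ | hx)
      · exact (Nat.sInf_le hx).trans hk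
      · simp only [hx, ofPred_false, Nat.sInf_empty, Nat.zero_le]
  rw [hpre]
  exact (MeasurableSet.biUnion (to_countable _) fun k _ => hp k).union
    (.iInter fun k => (hp k).compl)

variable {S : Type*}

/-- The paths on which the rare event ever occurs. -/
def markedPaths (S : Type*) : Set (ℕ → Transition S) := {y | ∃ n, (y n).2.2 = true}

/-- The index of the first transition at which the rare event occurs, `0` if it never does. -/
def firstMark (y : ℕ → Transition S) : ℕ := sInf {n | (y n).2.2 = true}

/-- The time elapsed up to and including the transition `firstMark y`. -/
def markTime (y : ℕ → Transition S) : ℝ := ∑ k ∈ Finset.range (firstMark y + 1), (y k).2.1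

/-- `exp (-s τ)` for the first-rare-event time `τ`, with the value `0` where the rare event never
occurs: unlike the exponential itself, it satisfies a renewal equation on all paths. -/
def markExp (s : ℝ) : (ℕ → Transition S) → ℝ :=
  (markedPaths S).indicator fun y => Real.exp (-(s * markTime y))

section Recursion

variable {x : Transition S} {y : ℕ → Transition S}

theorem firstMark_consSeq_of_mark (hx : x.2.2 = true) : firstMark (consSeq x y) = 0 :=
  Nat.sInf_eq_zero.2 (Or.inl hx)

theorem firstMark_consSeq_of_not_mark (hx : x.2.2 = false) (hy : y ∈ markedPaths S) :
    firstMark (consSeq x y) = firstMark y + 1 := by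
  have hpos : 1 ≤ sInf {n | (consSeq x y n).2.2 = true} := by
    obtain ⟨n, hn⟩ := hy
    refine Nat.one_le_iff_ne_zero.2 fun hzero => ?_
    have hmem := Nat.sInf_mem (s := {n | (consSeq x y n).2.2 = true}) ⟨n + 1, hn⟩
    rw [hzero] at hmem
    exact Bool.false_ne_true (hx.symm.trans hmem)
  exact (Nat.sInf_add hpos).symm

theorem markTime_consSeq_of_mark (hx : x.2.2 = true) : markTime (consSeq x y) = x.2.1 := by
  rw [markTime, firstMark_consSeq_of_mark hx, zero_add, Finset.sum_range_one, consSeq]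

theorem markTime_consSeq_of_not_mark (hx : x.2.2 = false) (hy : y ∈ markedPaths S) :
    markTime (consSeq x y) = x.2.1 + markTime y := by
  rw [markTime, firstMark_consSeq_of_not_mark hx hy, Finset.sum_range_succ', add_comm]
  rfl

theorem consSeq_mem_markedPaths_iff :
    consSeq x y ∈ markedPaths S ↔ x.2.2 = true ∨ y ∈ markedPaths S := by
  refine ⟨fun ⟨n, hn⟩ => ?_, fun h => h.elim (fun hx => ⟨0, hx⟩) fun ⟨n, hn⟩ => ⟨n + 1, hn⟩⟩
  cases n with
  | zero => exact Or.inl hn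
  | succ n => exact Or.inr ⟨n, hn⟩

theorem markExp_consSeq (s : ℝ) (x : Transition S) (y : ℕ → Transition S) :
    markExp s (consSeq x y) =
      Real.exp (-(s * x.2.1)) * bif x.2.2 then 1 else markExp s y := by
  cases hx : x.2.2 with
  | true =>
    rw [markExp, indicator_of_mem (consSeq_mem_markedPaths_iff.2 (Or.inl hx)),
      markTime_consSeq_of_mark hx, cond_true, mul_one]
  | false =>
    rw [cond_false]
    by_cases hy : y ∈ markedPaths S
    · rw [markExp, indicator_of_mem (consSeq_mem_markedPaths_iff.2 (Or.inr hy)),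
        indicator_of_mem hy, markTime_consSeq_of_not_mark hx hy, ← Real.exp_add]
      ring_nf
    · have hxy : consSeq x y ∉ markedPaths S := fun h =>
        (consSeq_mem_markedPaths_iff.1 h).elim (fun h => Bool.false_ne_true (hx.symm.trans h)) hy
      rw [markExp, indicator_of_notMem hxy, indicator_of_notMem hy, mul_zero]

end Recursion

theorem markExp_nonneg (s : ℝ) (y : ℕ → Transition S) : 0 ≤ markExp s y :=
  indicator_nonneg (fun _ _ => (Real.exp_pos _).le) y

theorem markExp_le_one {s : ℝ} (hs : 0 ≤ s) {y : ℕ → Transition S} (hy : ∀ n, 0 ≤ (y n).2.1) :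
    markExp s y ≤ 1 :=
  indicator_apply_le' (fun _ => exp_neg_mul_le_one hs (Finset.sum_nonneg fun n _ => hy n))
    fun _ => zero_le_one

section Measurability

variable [MeasurableSpace S]

theorem measurableSet_mark (n : ℕ) :
    MeasurableSet {y : ℕ → Transition S | (y n).2.2 = true} :=
  (measurable_snd.comp (measurable_snd.comp (measurable_pi_apply n))) (measurableSet_singleton true)

theorem measurableSet_markedPaths : MeasurableSet (markedPaths S) := by
  simp only [markedPaths, ofPred_exists]
  exact .iUnion measurableSet_mark

theorem measurable_markTime : Measurable (markTime (S := S)) := by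
  have hsum : Measurable fun ny : ℕ × (ℕ → Transition S) =>
      ∑ k ∈ Finset.range (ny.1 + 1), (ny.2 k).2.1 :=
    measurable_from_prod_countable_right fun n =>
      Finset.measurable_fun_sum (Finset.range (n + 1)) fun k _ => (measurable_pi_apply k).snd.fst
  exact hsum.comp ((measurable_sInf_nat measurableSet_mark).prodMk measurable_id)

theorem measurable_markExp (s : ℝ) : Measurable (markExp (S := S) s) :=
  Measurable.indicator (Real.measurable_exp.comp (measurable_markTime.const_mul s).neg)
    measurableSet_markedPaths

end Measurability

section FirstRareEventTime

variable {Ω : Type} {η : ℕ → Ω → S} {κ : ℝ → ℕ → Ω → ℝ} {ζ : ℝ → ℕ → Ω → Bool} {ε : ℝ}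

theorem nuRE_eq_firstMark_path {ω : Ω} (hω : path η (κ ε) (ζ ε) ω ∈ markedPaths S) :
    nuRE ζ ε ω = firstMark (path η (κ ε) (ζ ε) ω) + 1 := by
  obtain ⟨n, hn⟩ := hω
  have hmem := Nat.sInf_mem (s := {n | 1 ≤ n ∧ ζ ε n ω = true}) ⟨n + 1, Nat.le_add_left 1 n, hn⟩
  have hshift := (Nat.sInf_add (p := fun n => 1 ≤ n ∧ ζ ε n ω = true) hmem.1).symm
  simp only [Nat.le_add_left, true_and] at hshift
  exact hshift

theorem xiRE_eq_indicator (η : ℕ → Ω → S) (κ : ℝ → ℕ → Ω → ℝ) (ζ : ℝ → ℕ → Ω → Bool) (ε : ℝ)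
    (ω : Ω) : xiRE κ ζ ε ω = (markedPaths S).indicator markTime (path η (κ ε) (ζ ε) ω) := by
  by_cases hω : path η (κ ε) (ζ ε) ω ∈ markedPaths S
  · rw [indicator_of_mem hω, xiRE, nuRE_eq_firstMark_path hω, markTime,
      ← Finset.Ico_add_one_right_eq_Icc, Finset.sum_Ico_eq_sum_range, Nat.add_sub_cancel]
    simp only [path, Nat.add_comm 1]
  · have hempty : {n | 1 ≤ n ∧ ζ ε n ω = true} = ∅ :=
      eq_empty_of_forall_notMem fun n ⟨hn, hmark⟩ =>
        hω ⟨n - 1, by simpa only [path, Nat.sub_add_cancel hn] using hmark⟩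
    rw [indicator_of_notMem hω, xiRE, nuRE, hempty, Nat.sInf_empty]
    rfl

theorem exp_neg_mul_xiRE (η : ℕ → Ω → S) (κ : ℝ → ℕ → Ω → ℝ) (ζ : ℝ → ℕ → Ω → Bool) (ε s : ℝ)
    (ω : Ω) : Real.exp (-(s * xiRE κ ζ ε ω)) =
      1 + markExp s (path η (κ ε) (ζ ε) ω) - markExp 0 (path η (κ ε) (ζ ε) ω) := by
  rw [xiRE_eq_indicator η]
  by_cases hω : path η (κ ε) (ζ ε) ω ∈ markedPaths S
  · simp only [markExp, indicator_of_mem hω, zero_mul, neg_zero, Real.exp_zero, add_sub_cancel_left]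
  · simp only [markExp, indicator_of_notMem hω, mul_zero, neg_zero, Real.exp_zero, add_zero,
      sub_zero]

theorem xiRE_nonneg {ω : Ω} (hκ : ∀ n, 0 ≤ κ ε n ω) : 0 ≤ xiRE κ ζ ε ω :=
  Finset.sum_nonneg fun n _ => hκ n

end FirstRareEventTime

theorem measurable_cond_one [Countable S] [MeasurableSpace S] [MeasurableSingletonClass S]
    (f : S → ℝ) : Measurable fun jb : S × Bool => bif jb.2 then 1 else f jb.1 :=
  measurable_of_countable _

theorem integral_eq_sum_setIntegral_fiber {Ω ι : Type*} [MeasurableSpace Ω] [Fintype ι]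
    [MeasurableSpace ι] [MeasurableSingletonClass ι] {μ : Measure Ω} {f : Ω → ι}
    (hf : Measurable f) {g : Ω → ℝ} (hg : Integrable g μ) :
    ∫ ω, g ω ∂μ = ∑ i, ∫ ω in {ω | f ω = i}, g ω ∂μ := by
  have hunion : ⋃ i, {ω | f ω = i} = univ := iUnion_eq_univ_iff.2 fun ω => ⟨f ω, rfl⟩
  rw [← setIntegral_univ, ← hunion]
  refine integral_iUnion_fintype (fun i => hf (measurableSet_singleton i)) (fun i j hij => ?_)
    fun i => hg.integrableOn
  exact disjoint_left.2 fun ω hi hj => hij (hi.symm.trans hj)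

section Transforms

variable {Ω : Type*} [MeasurableSpace Ω] (P : S → Measure Ω) (η : ℕ → Ω → S) (κ : ℕ → Ω → ℝ)
  (ζ : ℕ → Ω → Bool) (s : ℝ) (i : S)

/-- The joint transform `E_i[exp (-s κ₁); η₁ = j, ζ₁ = 0]` of the first transition. -/
def survivalLaplace (j : S) : ℝ :=
  laplace (κ 1) ((P i).restrict {ω | η 1 ω = j ∧ ζ 1 ω = false}) s

/-- The transform `E_i[exp (-s κ₁); ζ₁ = 1]` of the first transition. -/
def rareLaplace : ℝ :=
  laplace (κ 1) ((P i).restrict {ω | ζ 1 ω = true}) s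

/-- The transform `E_i[exp (-s τ); τ < ∞]` of the first-rare-event time `τ`. -/
def markLaplace : ℝ :=
  ∫ ω, markExp s (path η κ ζ ω) ∂P i

theorem survivalLaplace_nonneg (j : S) : 0 ≤ survivalLaplace P η κ ζ s i j := mgf_nonneg

theorem rareLaplace_nonneg : 0 ≤ rareLaplace P κ ζ s i := mgf_nonneg

theorem markLaplace_nonneg : 0 ≤ markLaplace P η κ ζ s i :=
  integral_nonneg fun _ => markExp_nonneg s _

end Transforms

namespace IsMarkovRenewal

variable {Ω : Type*} [MeasurableSpace S] [MeasurableSpace Ω] {P : S → Measure Ω} {η : ℕ → Ω → S}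
  {κ : ℕ → Ω → ℝ} {ζ : ℕ → Ω → Bool} {Q : S → S → ℝ → Bool → ℝ}

theorem integrable_markExp_path (h : IsMarkovRenewal P η κ ζ Q) {s : ℝ} (hs : 0 ≤ s) (i : S) :
    Integrable (fun ω => markExp s (path η κ ζ ω)) (P i) := by
  have := h.isProbabilityMeasure i
  refine (integrable_const (1 : ℝ)).mono'
    ((measurable_markExp s).comp h.measurable_path).aestronglyMeasurable
    (Eventually.of_forall fun ω => ?_)
  rw [Real.norm_of_nonneg (markExp_nonneg s _)]
  exact markExp_le_one hs fun n => h.sojourn_nonneg (n + 1) ω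

theorem integrable_exp_sojourn (h : IsMarkovRenewal P η κ ζ Q) {s : ℝ} (hs : 0 ≤ s) (i : S) :
    Integrable (fun ω => Real.exp (-(s * κ 1 ω))) (P i) := by
  have := h.isProbabilityMeasure i
  exact integrable_exp_neg_mul (h.measurable_sojourn 1).aemeasurable
    (Eventually.of_forall (h.sojourn_nonneg 1)) hs

theorem integral_markExp_consSeq_pathKernel [Countable S] [MeasurableSingletonClass S]
    (h : IsMarkovRenewal P η κ ζ Q) (s : ℝ) (z : Transition S) :
    ∫ y, markExp s (consSeq z y) ∂pathKernel P η κ ζ z.1 =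
      Real.exp (-(s * z.2.1)) * bif z.2.2 then 1 else markLaplace P η κ ζ s z.1 := by
  have := h.isMarkovKernel_pathKernel
  have hlap : ∫ y, markExp s y ∂pathKernel P η κ ζ z.1 = markLaplace P η κ ζ s z.1 :=
    integral_map h.measurable_path.aemeasurable (measurable_markExp s).aestronglyMeasurable
  simp only [markExp_consSeq]
  rw [integral_const_mul]
  cases z.2.2
  · rw [← hlap]
    rfl
  · simp only [cond_true, integral_const, probReal_univ, one_smul]

theorem markLaplace_eq_integral [Countable S] [MeasurableSingletonClass S]
    (h : IsMarkovRenewal P η κ ζ Q) {s : ℝ} (hs : 0 ≤ s) (i : S) :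
    markLaplace P η κ ζ s i = ∫ ω, Real.exp (-(s * κ 1 ω)) *
      bif ζ 1 ω then 1 else markLaplace P η κ ζ s (η 1 ω) ∂P i := by
  have hpath := h.measurable_path
  have hhead : Measurable fun ω => path η κ ζ ω 0 := (measurable_pi_apply 0).comp hpath
  have := h.isProbabilityMeasure i
  have := h.isMarkovKernel_pathKernel
  have := Measure.isProbabilityMeasure_map (μ := P i) hhead.aemeasurable
  have hexp := (measurable_markExp (S := S) s).aestronglyMeasurable (μ := (P i).map (path η κ ζ))
  have hint := (integrable_map_measure hexp hpath.aemeasurable).2 (h.integrable_markExp_path hs i)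
  rw [h.map_path_eq i] at hint hexp
  have hcons : Integrable (fun zy : Transition S × (ℕ → Transition S) =>
      markExp s (consSeq zy.1 zy.2)) _ :=
    (integrable_map_measure hexp measurable_consSeq.aemeasurable).1 hint
  have hmeas : Measurable fun z : Transition S =>
      Real.exp (-(s * z.2.1)) * bif z.2.2 then 1 else markLaplace P η κ ζ s z.1 :=
    Measurable.mul (by fun_prop) ((measurable_cond_one (markLaplace P η κ ζ s)).comp
      (measurable_fst.prodMk (measurable_snd.comp measurable_snd)))
  calc markLaplace P η κ ζ s i
      = ∫ y, markExp s y ∂(P i).map (path η κ ζ) :=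
        (integral_map hpath.aemeasurable (measurable_markExp s).aestronglyMeasurable).symm
    _ = ∫ z, ∫ y, markExp s (consSeq z y) ∂pathKernel P η κ ζ z.1
          ∂(P i).map fun ω => path η κ ζ ω 0 := by
        rw [h.map_path_eq i, integral_map measurable_consSeq.aemeasurable hexp,
          Measure.integral_compProd hcons]
        rfl
    _ = _ := by
        simp only [h.integral_markExp_consSeq_pathKernel s]
        exact integral_map hhead.aemeasurable hmeas.aestronglyMeasurable

section Renewal

variable [Fintype S] [MeasurableSingletonClass S]

theorem integral_eq_sum_survival_add_rare (h : IsMarkovRenewal P η κ ζ Q) {i : S} {g : Ω → ℝ}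
    (hg : Integrable g (P i)) :
    ∫ ω, g ω ∂P i = ∑ j, ∫ ω in {ω | η 1 ω = j ∧ ζ 1 ω = false}, g ω ∂P i +
      ∫ ω in {ω | ζ 1 ω = true}, g ω ∂P i := by
  rw [integral_eq_sum_setIntegral_fiber (h.measurable_mark 1) hg, Fintype.sum_bool, add_comm,
    integral_eq_sum_setIntegral_fiber (h.measurable_state 1) hg.restrict]
  congr 1
  refine Finset.sum_congr rfl fun j _ => ?_
  rw [Measure.restrict_restrict (s := {ω | η 1 ω = j})
    (h.measurable_state 1 (measurableSet_singleton j))]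
  rfl

theorem markLaplace_eq (h : IsMarkovRenewal P η κ ζ Q) {s : ℝ} (hs : 0 ≤ s) (i : S) :
    markLaplace P η κ ζ s i =
      ∑ j, survivalLaplace P η κ ζ s i j * markLaplace P η κ ζ s j + rareLaplace P κ ζ s i := by
  have hint : Integrable (fun ω => Real.exp (-(s * κ 1 ω)) *
      bif ζ 1 ω then 1 else markLaplace P η κ ζ s (η 1 ω)) (P i) := by
    obtain ⟨C, hC⟩ := (finite_range fun jb : S × Bool =>
      bif jb.2 then 1 else markLaplace P η κ ζ s jb.1).isBounded.exists_norm_le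
    exact (h.integrable_exp_sojourn hs i).mul_bdd
      ((measurable_cond_one (markLaplace P η κ ζ s)).comp
        ((h.measurable_state 1).prodMk (h.measurable_mark 1))).aestronglyMeasurable
      (Eventually.of_forall fun ω => hC _ (mem_range_self (η 1 ω, ζ 1 ω)))
  have hmark : ∀ b, MeasurableSet {ω | ζ 1 ω = b} := fun b =>
    h.measurable_mark 1 (measurableSet_singleton b)
  rw [h.markLaplace_eq_integral hs, h.integral_eq_sum_survival_add_rare hint]
  congr 1
  · refine Finset.sum_congr rfl fun j _ => ?_
    rw [survivalLaplace, laplace_eq_integral, ← integral_mul_const]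
    refine setIntegral_congr_fun
      ((h.measurable_state 1 (measurableSet_singleton j)).inter (hmark false)) fun ω hω => ?_
    simp only [hω.1, hω.2, cond_false]
  · rw [rareLaplace, laplace_eq_integral]
    refine setIntegral_congr_fun (hmark true) fun ω hω => ?_
    simp only [show ζ 1 ω = true from hω, cond_true, mul_one]

theorem sum_survivalLaplace_add_rareLaplace (h : IsMarkovRenewal P η κ ζ Q) {s : ℝ} (hs : 0 ≤ s)
    (i : S) : ∑ j, survivalLaplace P η κ ζ s i j + rareLaplace P κ ζ s i =
      ∫ ω, Real.exp (-(s * κ 1 ω)) ∂P i := by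
  simp only [h.integral_eq_sum_survival_add_rare (h.integrable_exp_sojourn hs i), survivalLaplace,
    rareLaplace, laplace_eq_integral]

theorem sum_measureReal_state_one_eq (h : IsMarkovRenewal P η κ ζ Q) (i : S) :
    ∑ j, (P i).real {ω | η 1 ω = j} = 1 := by
  have := h.isProbabilityMeasure i
  have hsum := integral_eq_sum_setIntegral_fiber (h.measurable_state 1)
    (integrable_const (μ := P i) (1 : ℝ))
  simp only [integral_const, probReal_univ, measureReal_restrict_apply_univ, smul_eq_mul,
    mul_one] at hsum
  exact hsum.symm

end Renewal

theorem integral_exp_neg_mul_xiRE {Ω : Type} [MeasurableSpace Ω] {P : S → Measure Ω}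
    {η : ℕ → Ω → S} {κ : ℝ → ℕ → Ω → ℝ} {ζ : ℝ → ℕ → Ω → Bool} {ε : ℝ}
    (h : IsMarkovRenewal P η (κ ε) (ζ ε) Q) {s : ℝ} (hs : 0 ≤ s) (i : S) :
    ∫ ω, Real.exp (-(s * xiRE κ ζ ε ω)) ∂P i =
      1 + markLaplace P η (κ ε) (ζ ε) s i - markLaplace P η (κ ε) (ζ ε) 0 i := by
  have := h.isProbabilityMeasure i
  have hs_int := h.integrable_markExp_path hs i
  have h0_int := h.integrable_markExp_path le_rfl i
  simp only [exp_neg_mul_xiRE η, add_sub_assoc]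
  have hsub_int : Integrable (fun ω => markExp s (path η (κ ε) (ζ ε) ω) -
      markExp 0 (path η (κ ε) (ζ ε) ω)) (P i) := hs_int.sub h0_int
  rw [integral_add (integrable_const 1) hsub_int, integral_sub hs_int h0_int,
    integral_const, probReal_univ, one_smul]
  rfl

theorem measurable_xiRE {Ω : Type} [MeasurableSpace Ω] {P : S → Measure Ω} {η : ℕ → Ω → S}
    {κ : ℝ → ℕ → Ω → ℝ} {ζ : ℝ → ℕ → Ω → Bool} {ε : ℝ}
    (h : IsMarkovRenewal P η (κ ε) (ζ ε) Q) : Measurable (xiRE κ ζ ε) := by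
  rw [funext (xiRE_eq_indicator η κ ζ ε)]
  exact (measurable_markTime.indicator measurableSet_markedPaths).comp h.measurable_path

theorem survivalLaplace_le (h : IsMarkovRenewal P η κ ζ Q) {s : ℝ} (hs : 0 ≤ s) (i j : S) :
    survivalLaplace P η κ ζ s i j ≤ (P i).real {ω | η 1 ω = j} := by
  have := h.isProbabilityMeasure i
  refine (laplace_le_measureReal_univ (h.measurable_sojourn 1).aemeasurable
    (Eventually.of_forall (h.sojourn_nonneg 1)) hs).trans ?_
  rw [measureReal_restrict_apply_univ]
  exact measureReal_mono fun ω hω => hω.1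

theorem rareLaplace_le (h : IsMarkovRenewal P η κ ζ Q) {s : ℝ} (hs : 0 ≤ s) (i : S) :
    rareLaplace P κ ζ s i ≤ (P i).real {ω | ζ 1 ω = true} := by
  have := h.isProbabilityMeasure i
  refine (laplace_le_measureReal_univ (h.measurable_sojourn 1).aemeasurable
    (Eventually.of_forall (h.sojourn_nonneg 1)) hs).trans ?_
  rw [measureReal_restrict_apply_univ]

theorem measureReal_mark_sub_rareLaplace_le (h : IsMarkovRenewal P η κ ζ Q) {s δ : ℝ}
    (hs : 0 ≤ s) (hδ : 0 ≤ δ) (i : S) :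
    (P i).real {ω | ζ 1 ω = true} - rareLaplace P κ ζ s i ≤
      s * δ * (P i).real {ω | ζ 1 ω = true} + (P i).real {ω | δ < κ 1 ω ∧ ζ 1 ω = true} := by
  have := h.isProbabilityMeasure i
  have hle := measureReal_univ_sub_laplace_le (μ := (P i).restrict {ω | ζ 1 ω = true})
    (h.measurable_sojourn 1) (Eventually.of_forall (h.sojourn_nonneg 1)) hs hδ
  rwa [measureReal_restrict_apply_univ, measureReal_restrict_apply
    (measurableSet_lt measurable_const (h.measurable_sojourn 1))] at hle

end IsMarkovRenewal

end FirstRareEvent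

section Perturbation

variable {S X : Type*} {l : Filter X} {p a : X → S → S → ℝ} {i j : S}

theorem reflTransGen_of_ring {R : S → S → Prop} {N : ℕ} {c : ℕ → S} (hring : c N = c 0)
    (hc : ∀ i, ∃ k ≤ N, c k = i) (hR : ∀ k < N, R (c k) (c (k + 1))) (i j : S) :
    Relation.ReflTransGen R i j := by
  have hforward : ∀ {a b}, a ≤ b → b ≤ N → Relation.ReflTransGen R (c a) (c b) := fun hab hbN =>
    Relation.ReflTransGen.lift c le_rfl _ _ (reflTransGen_of_succ_of_le
      (fun a b => R (c a) (c b)) (fun k hk => hR k (hk.2.trans_le hbN)) hab)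
  obtain ⟨a, ha, rfl⟩ := hc i
  obtain ⟨b, hb, rfl⟩ := hc j
  exact (hforward ha le_rfl).trans (hring ▸ hforward b.zero_le hb)

/-- The transition probability from `i` to `j` stays bounded away from `0` along the filter `l`. -/
def Linked (l : Filter X) (p : X → S → S → ℝ) (i j : S) : Prop :=
  ∃ c > 0, ∀ᶠ x in l, c ≤ p x i j

theorem CondB.reflTransGen_linked {m : ℕ} {p : ℝ → Fin m → Fin m → ℝ} (hB : CondB p)
    (hp : ∀ᶠ ε in 𝓝[>] (0 : ℝ), ∀ i j, 0 ≤ p ε i j) (i j : Fin m) :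
    Relation.ReflTransGen (Linked (𝓝[>] (0 : ℝ)) p) i j := by
  obtain ⟨N, -, c, hring, hc, hpos⟩ := hB
  refine reflTransGen_of_ring hring hc (fun k hk => ?_) i j
  obtain ⟨δ, hδ, hδlim⟩ := exists_between (hpos k hk)
  have hbdd : IsBoundedUnder (· ≥ ·) (𝓝[>] (0 : ℝ)) fun ε => p ε (c k) (c (k + 1)) :=
    isBoundedUnder_of_eventually_ge (hp.mono fun ε hε => hε _ _)
  exact ⟨δ, hδ, (eventually_lt_of_lt_liminf hδlim hbdd).mono fun _ => le_of_lt⟩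

theorem exists_eventually_le_mul_of_reflTransGen_linked [Fintype S] {D : X → S → ℝ} {r : X → ℝ}
    (hij : Relation.ReflTransGen (Linked l p) i j) (hp : ∀ᶠ x in l, ∀ i j, 0 ≤ p x i j)
    (hD : ∀ᶠ x in l, ∀ i, 0 ≤ D x i) (hr : ∀ᶠ x in l, 0 ≤ r x)
    (hsuper : ∀ᶠ x in l, ∀ i, ∑ j, p x i j * D x j ≤ D x i + r x) :
    ∃ K, 0 ≤ K ∧ ∀ᶠ x in l, D x j ≤ K * (D x i + r x) := by
  induction hij with
  | refl => exact ⟨1, zero_le_one, hr.mono fun x hx => by linarith⟩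
  | @tail j k _ hjk ih =>
    obtain ⟨K, hK, hle⟩ := ih
    obtain ⟨c, hc, hcp⟩ := hjk
    refine ⟨(K + 1) / c, by positivity, ?_⟩
    filter_upwards [hp, hD, hsuper, hle, hcp] with x hpx hDx hsx hlex hcx
    rw [div_mul_eq_mul_div, le_div_iff₀' hc]
    calc c * D x k ≤ p x j k * D x k := mul_le_mul_of_nonneg_right hcx (hDx k)
      _ ≤ ∑ k, p x j k * D x k := Finset.single_le_sum (f := fun k => p x j k * D x k)
          (fun k _ => mul_nonneg (hpx j k) (hDx k)) (Finset.mem_univ k)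
      _ ≤ D x j + r x := hsx j
      _ ≤ (K + 1) * (D x i + r x) := by linarith [hDx i]

theorem eventually_stationary_pos {m : ℕ} {p : X → Fin m → Fin m → ℝ} {π : X → Fin m → ℝ}
    (hp : ∀ᶠ x in l, ∀ i j, 0 ≤ p x i j) (hπ : ∀ᶠ x in l, IsStationaryDist (p x) (π x))
    (hlink : ∀ i j, Relation.ReflTransGen (Linked l p) i j) : ∀ᶠ x in l, ∀ j, 0 < π x j := by
  have hspread : ∀ i j, ∀ᶠ x in l, 0 < π x i → 0 < π x j := fun i j => by
    induction hlink i j with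
    | refl => exact Eventually.of_forall fun _ h => h
    | @tail j k _ hjk ih =>
      obtain ⟨c, hc, hcp⟩ := hjk
      filter_upwards [hp, hπ, ih, hcp] with x hpx ⟨hπ0, _, hinv⟩ hix hcx hi
      rw [hinv k]
      exact Finset.sum_pos' (fun i _ => mul_nonneg (hπ0 i) (hpx i k))
        ⟨j, Finset.mem_univ j, mul_pos (hix hi) (hc.trans_le hcx)⟩
  filter_upwards [hπ, eventually_all.2 fun i => eventually_all.2 (hspread i)] with x hπx hx j
  obtain ⟨i, -, hi⟩ : ∃ i ∈ Finset.univ, 0 < π x i := Finset.exists_lt_of_sum_lt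
    (by rw [Finset.sum_const_zero, hπx.2.1]; exact zero_lt_one)
  exact hx i j hi

/-- The renewal equation `Ψ = a Ψ + b` for a chain with transition matrix `p` that is killed, at
rate `p - a`, during its transitions. -/
structure IsRenewalSystem [Fintype S] (p a : S → S → ℝ) (b Ψ : S → ℝ) : Prop where
  sum_eq_one : ∀ i, ∑ j, p i j = 1
  survival_nonneg : ∀ i j, 0 ≤ a i j
  survival_le : ∀ i j, a i j ≤ p i j
  source_nonneg : ∀ i, 0 ≤ b i
  solution_nonneg : ∀ i, 0 ≤ Ψ i
  solution_eq : ∀ i, Ψ i = ∑ j, a i j * Ψ j + b i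

namespace IsRenewalSystem

theorem sum_mul_sub_le [Fintype S] {p a : S → S → ℝ} {b Ψ : S → ℝ} (h : IsRenewalSystem p a b Ψ)
    (M : ℝ) (i : S) : ∑ j, p i j * (M - Ψ j) ≤ M - Ψ i + b i := by
  have hsurvival : ∑ j, a i j * Ψ j ≤ ∑ j, p i j * Ψ j := Finset.sum_le_sum fun j _ =>
    mul_le_mul_of_nonneg_right (h.survival_le i j) (h.solution_nonneg j)
  simp only [mul_sub, Finset.sum_sub_distrib, ← Finset.sum_mul, h.sum_eq_one, one_mul]
  linarith [h.solution_eq i]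

theorem exists_eventually_abs_sub_le [Fintype S] [Nonempty S] {b Ψ : X → S → ℝ}
    (h : ∀ᶠ x in l, IsRenewalSystem (p x) (a x) (b x) (Ψ x))
    (hlink : ∀ i j, Relation.ReflTransGen (Linked l p) i j) :
    ∃ K, ∀ᶠ x in l, ∀ i j, |Ψ x i - Ψ x j| ≤ K * ∑ k, b x k := by
  set D : X → S → ℝ := fun x j => (⨆ i, Ψ x i) - Ψ x j
  have hD : ∀ x j, 0 ≤ D x j := fun x j =>
    sub_nonneg.2 (le_ciSup (finite_range (Ψ x)).bddAbove j)
  have hb : ∀ᶠ x in l, 0 ≤ ∑ k, b x k := h.mono fun x hx =>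
    Finset.sum_nonneg fun k _ => hx.source_nonneg k
  have hsuper : ∀ᶠ x in l, ∀ i, ∑ j, p x i j * D x j ≤ D x i + ∑ k, b x k := h.mono fun x hx i =>
    (hx.sum_mul_sub_le _ i).trans (add_le_add_right (Finset.single_le_sum
      (fun k _ => hx.source_nonneg k) (Finset.mem_univ i)) _)
  choose K hK hle using fun i j => exists_eventually_le_mul_of_reflTransGen_linked (hlink i j)
    (h.mono fun x hx i j => (hx.survival_nonneg i j).trans (hx.survival_le i j))
    (Eventually.of_forall hD) hb hsuper
  refine ⟨∑ i, ∑ j, K i j, ?_⟩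
  filter_upwards [hb, eventually_all.2 fun i => eventually_all.2 (hle i)] with x hbx hx i j
  obtain ⟨i₀, hi₀⟩ := exists_eq_ciSup_of_finite (f := Ψ x)
  have hDle : ∀ j, D x j ≤ (∑ i, ∑ j, K i j) * ∑ k, b x k := fun j => by
    have hKle : K i₀ j ≤ ∑ i, ∑ j, K i j :=
      (Finset.single_le_sum (fun j _ => hK i₀ j) (Finset.mem_univ j)).trans
        (Finset.single_le_sum (f := fun i => ∑ j, K i j)
          (fun i _ => Finset.sum_nonneg fun j _ => hK i j) (Finset.mem_univ i₀))
    refine (hx i₀ j).trans ?_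
    rw [show D x i₀ = 0 from sub_eq_zero.2 hi₀.symm, zero_add]
    exact mul_le_mul_of_nonneg_right hKle hbx
  rw [abs_sub_le_iff]
  constructor <;> linarith [hDle i, hDle j, hD x i, hD x j]

section Stationary

variable {m : ℕ} {p a : Fin m → Fin m → ℝ} {π b Ψ : Fin m → ℝ}

theorem mul_sum_sub_sum_eq (h : IsRenewalSystem p a b Ψ) (hπ : IsStationaryDist p π) (c : ℝ) :
    c * ∑ i, π i * (1 - ∑ j, a i j) - ∑ i, π i * b i =
      ∑ i, ∑ j, π i * (p i j - a i j) * (c - Ψ j) := by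
  have hinv : ∑ i, ∑ j, π i * p i j * Ψ j = ∑ j, π j * Ψ j := by
    rw [Finset.sum_comm]
    exact Finset.sum_congr rfl fun j _ => by rw [← Finset.sum_mul, ← hπ.2.2 j]
  have hrenewal : ∑ i, π i * Ψ i = ∑ i, ∑ j, π i * a i j * Ψ j + ∑ i, π i * b i := by
    rw [← Finset.sum_add_distrib]
    refine Finset.sum_congr rfl fun i _ => ?_
    simp only [mul_assoc, ← Finset.mul_sum]
    rw [← mul_add, ← h.solution_eq i]
  have hkilled : ∀ i, ∑ j, π i * (p i j - a i j) * (c - Ψ j) = c * (π i * (1 - ∑ j, a i j)) -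
      (∑ j, π i * p i j * Ψ j - ∑ j, π i * a i j * Ψ j) := fun i => by
    rw [← h.sum_eq_one i, ← Finset.sum_sub_distrib, ← Finset.sum_sub_distrib, Finset.mul_sum,
      Finset.mul_sum, ← Finset.sum_sub_distrib]
    exact Finset.sum_congr rfl fun j _ => by ring
  rw [Finset.sum_congr rfl fun i _ => hkilled i, Finset.sum_sub_distrib, Finset.sum_sub_distrib,
    ← Finset.mul_sum]
  linarith

theorem abs_mul_sum_sub_sum_le (h : IsRenewalSystem p a b Ψ) (hπ : IsStationaryDist p π)
    {c δ : ℝ} (hδ : ∀ j, |c - Ψ j| ≤ δ) :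
    |c * ∑ i, π i * (1 - ∑ j, a i j) - ∑ i, π i * b i| ≤ δ * ∑ i, π i * (1 - ∑ j, a i j) := by
  rw [h.mul_sum_sub_sum_eq hπ]
  calc |∑ i, ∑ j, π i * (p i j - a i j) * (c - Ψ j)|
      ≤ ∑ i, ∑ j, |π i * (p i j - a i j) * (c - Ψ j)| :=
        (Finset.abs_sum_le_sum_abs _ _).trans
          (Finset.sum_le_sum fun i _ => Finset.abs_sum_le_sum_abs _ _)
    _ ≤ ∑ i, ∑ j, π i * (p i j - a i j) * δ := by
        refine Finset.sum_le_sum fun i _ => Finset.sum_le_sum fun j _ => ?_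
        have hweight : 0 ≤ π i * (p i j - a i j) :=
          mul_nonneg (hπ.1 i) (sub_nonneg.2 (h.survival_le i j))
        rw [abs_mul, abs_of_nonneg hweight]
        exact mul_le_mul_of_nonneg_left (hδ j) hweight
    _ = δ * ∑ i, π i * (1 - ∑ j, a i j) := by
        simp only [← Finset.sum_mul, ← Finset.mul_sum, Finset.sum_sub_distrib, h.sum_eq_one,
          mul_comm δ]

end Stationary

theorem tendsto_solution {m : ℕ} {p a : X → Fin m → Fin m → ℝ} {π b Ψ : X → Fin m → ℝ}
    {w : X → ℝ} {u v : ℝ} (h : ∀ᶠ x in l, IsRenewalSystem (p x) (a x) (b x) (Ψ x))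
    (hπ : ∀ᶠ x in l, IsStationaryDist (p x) (π x))
    (hlink : ∀ i j, Relation.ReflTransGen (Linked l p) i j)
    (hb : ∀ i, Tendsto (fun x => b x i) l (𝓝 0))
    (hV : Tendsto (fun x => w x * ∑ i, π x i * b x i) l (𝓝 v))
    (hU : Tendsto (fun x => w x * ∑ i, π x i * (1 - ∑ j, a x i j)) l (𝓝 u)) (hu : u ≠ 0)
    (k : Fin m) : Tendsto (fun x => Ψ x k) l (𝓝 (v / u)) := by
  have : Nonempty (Fin m) := ⟨k⟩
  obtain ⟨K, hK⟩ := exists_eventually_abs_sub_le h hlink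
  have herr : Tendsto (fun x => K * (∑ i, b x i) * |w x * ∑ i, π x i * (1 - ∑ j, a x i j)|) l
      (𝓝 0) := by
    simpa using ((tendsto_finsetSum Finset.univ fun i _ => hb i).const_mul K).mul hU.abs
  have hdiff : Tendsto (fun x => Ψ x k * (w x * ∑ i, π x i * (1 - ∑ j, a x i j)) -
      w x * ∑ i, π x i * b x i) l (𝓝 0) := by
    refine squeeze_zero_norm' ?_ herr
    filter_upwards [h, hπ, hK] with x hx hπx hKx
    have hle := hx.abs_mul_sum_sub_sum_le hπx (hKx k)
    rw [mul_left_comm, ← mul_sub, norm_mul, Real.norm_eq_abs, Real.norm_eq_abs, abs_mul,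
      mul_left_comm _ |w x|]
    refine mul_le_mul_of_nonneg_left (hle.trans ?_) (abs_nonneg _)
    exact mul_le_mul_of_nonneg_left (le_abs_self _) ((abs_nonneg _).trans (hKx k k))
  have hquot := (hdiff.add hV).div hU hu
  rw [zero_add] at hquot
  refine hquot.congr' ?_
  filter_upwards [hU.eventually_ne hu] with x hx
  simp only [Pi.div_apply, sub_add_cancel, mul_div_cancel_right₀ _ hx]

end IsRenewalSystem

theorem tendsto_sum_mul_of_sum_eq_one [Fintype S] {w f : X → S → ℝ} {y : ℝ}
    (hw : ∀ᶠ x in l, (∀ i, 0 ≤ w x i) ∧ ∑ i, w x i = 1)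
    (hf : ∀ i, Tendsto (fun x => f x i) l (𝓝 y)) :
    Tendsto (fun x => ∑ i, w x i * f x i) l (𝓝 y) := by
  have hdev : Tendsto (fun x => ∑ i, |f x i - y|) l (𝓝 0) := by
    simpa using tendsto_finsetSum Finset.univ fun i _ => ((hf i).sub_const y).abs
  rw [tendsto_iff_norm_sub_tendsto_zero]
  refine squeeze_zero' (Eventually.of_forall fun _ => norm_nonneg _) ?_ hdev
  filter_upwards [hw] with x ⟨hw0, hw1⟩
  have hsum : ∑ i, w x i * f x i - y = ∑ i, w x i * (f x i - y) := by
    simp only [mul_sub, Finset.sum_sub_distrib, ← Finset.sum_mul, hw1, one_mul]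
  rw [hsum]
  refine (norm_sum_le _ _).trans (Finset.sum_le_sum fun i _ => ?_)
  rw [norm_mul, Real.norm_of_nonneg (hw0 i)]
  have hw_le : w x i ≤ 1 := hw1 ▸ Finset.single_le_sum (fun i _ => hw0 i) (Finset.mem_univ i)
  exact mul_le_of_le_one_left (norm_nonneg _) hw_le

end Perturbation

section Asymptotics

variable {m : ℕ} {Ω : Type} [MeasurableSpace Ω] {η : ℝ → ℕ → Ω → Fin m} {κ : ℝ → ℕ → Ω → ℝ}
  {ζ : ℝ → ℕ → Ω → Bool} {P : ℝ → Fin m → Measure Ω} {Q : ℝ → Fin m → Fin m → ℝ → Bool → ℝ}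
  {p : ℝ → Fin m → Fin m → ℝ} {π : ℝ → Fin m → ℝ} {ε s L : ℝ}

theorem rareP_nonneg (ε : ℝ) (i : Fin m) : 0 ≤ rareP P ζ ε i := ENNReal.toReal_nonneg

theorem avgRare_pos (hπ : ∀ i, 0 < π ε i) (hrare : ∃ i, 0 < rareP P ζ ε i) :
    0 < avgRare P ζ π ε := by
  obtain ⟨i, hi⟩ := hrare
  exact Finset.sum_pos' (fun i _ => mul_nonneg (hπ i).le (rareP_nonneg ε i))
    ⟨i, Finset.mem_univ i, mul_pos (hπ i) hi⟩

theorem sum_mul_one_sub_sum_survivalLaplace (h : IsMarkovRenewal (P ε) (η ε) (κ ε) (ζ ε) (Q ε))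
    (hπ : ∑ i, π ε i = 1) (hs : 0 ≤ s) :
    ∑ i, π ε i * (1 - ∑ j, survivalLaplace (P ε) (η ε) (κ ε) (ζ ε) s i j) =
      ∑ i, π ε i * rareLaplace (P ε) (κ ε) (ζ ε) s i + (1 - lapPhi P κ π ε s) := by
  simp only [lapPhi, ← h.sum_survivalLaplace_add_rareLaplace hs, mul_sub, mul_add, mul_one,
    Finset.sum_sub_distrib, Finset.sum_add_distrib, hπ]
  ring

/-- Markov renewal processes under conditions A, B and C, with transition probabilities `p ε` and
stationary distributions `π ε` of the embedded chains. -/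
structure IsRareEventFamily (P : ℝ → Fin m → Measure Ω) (η : ℝ → ℕ → Ω → Fin m)
    (κ : ℝ → ℕ → Ω → ℝ) (ζ : ℝ → ℕ → Ω → Bool) (Q : ℝ → Fin m → Fin m → ℝ → Bool → ℝ)
    (p : ℝ → Fin m → Fin m → ℝ) (π : ℝ → Fin m → ℝ) : Prop where
  isMarkovRenewal : ∀ᶠ ε in 𝓝[>] (0 : ℝ), IsMarkovRenewal (P ε) (η ε) (κ ε) (ζ ε) (Q ε)
  transition_eq : ∀ᶠ ε in 𝓝[>] (0 : ℝ), ∀ i j, p ε i j = (P ε i).real {ω | η ε 1 ω = j}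
  condB : CondB p
  stationary : ∀ᶠ ε in 𝓝[>] (0 : ℝ), IsStationaryDist (p ε) (π ε)
  exists_rareP_pos : ∀ᶠ ε in 𝓝[>] (0 : ℝ), ∃ i, 0 < rareP P ζ ε i
  tendsto_rareP : ∀ i, Tendsto (fun ε => rareP P ζ ε i) (𝓝[>] 0) (𝓝 0)
  tendsto_sojourn : ∀ i, ∀ δ > 0, Tendsto
    (fun ε => (P ε i).real {ω | δ < κ ε 1 ω ∧ ζ ε 1 ω = true} / rareP P ζ ε i) (𝓝[>] 0) (𝓝 0)

namespace IsRareEventFamily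

theorem reflTransGen_linked (h : IsRareEventFamily P η κ ζ Q p π) (i j : Fin m) :
    Relation.ReflTransGen (Linked (𝓝[>] (0 : ℝ)) p) i j :=
  h.condB.reflTransGen_linked
    (h.transition_eq.mono fun _ hε i j => hε i j ▸ measureReal_nonneg) i j

theorem eventually_avgRare_pos (h : IsRareEventFamily P η κ ζ Q p π) :
    ∀ᶠ ε in 𝓝[>] (0 : ℝ), 0 < avgRare P ζ π ε := by
  filter_upwards [h.exists_rareP_pos, eventually_stationary_pos
    (h.transition_eq.mono fun _ hε i j => hε i j ▸ measureReal_nonneg) h.stationary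
    h.reflTransGen_linked] with ε hrare hπ using avgRare_pos hπ hrare

theorem eventually_isRenewalSystem (h : IsRareEventFamily P η κ ζ Q p π) (hs : 0 ≤ s) :
    ∀ᶠ ε in 𝓝[>] (0 : ℝ), IsRenewalSystem (p ε) (survivalLaplace (P ε) (η ε) (κ ε) (ζ ε) s)
      (rareLaplace (P ε) (κ ε) (ζ ε) s) (markLaplace (P ε) (η ε) (κ ε) (ζ ε) s) := by
  filter_upwards [h.isMarkovRenewal, h.transition_eq] with ε hε hp
  exact {
    sum_eq_one := fun i => by simp only [hp, hε.sum_measureReal_state_one_eq i]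
    survival_nonneg := survivalLaplace_nonneg _ _ _ _ s
    survival_le := fun i j => hp i j ▸ hε.survivalLaplace_le hs i j
    source_nonneg := rareLaplace_nonneg _ _ _ s
    solution_nonneg := markLaplace_nonneg _ _ _ _ s
    solution_eq := hε.markLaplace_eq hs }

theorem tendsto_rareLaplace (h : IsRareEventFamily P η κ ζ Q p π) (hs : 0 ≤ s) (i : Fin m) :
    Tendsto (fun ε => rareLaplace (P ε) (κ ε) (ζ ε) s i) (𝓝[>] 0) (𝓝 0) :=
  squeeze_zero' (Eventually.of_forall fun _ => rareLaplace_nonneg _ _ _ s i)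
    (h.isMarkovRenewal.mono fun _ hε => hε.rareLaplace_le hs i) (h.tendsto_rareP i)

theorem tendsto_rareP_sub_rareLaplace_div (h : IsRareEventFamily P η κ ζ Q p π) (hs : 0 ≤ s)
    (i : Fin m) : Tendsto
      (fun ε => (rareP P ζ ε i - rareLaplace (P ε) (κ ε) (ζ ε) s i) / rareP P ζ ε i)
      (𝓝[>] 0) (𝓝 0) := by
  have hbound : ∀ δ > 0, ∀ᶠ ε in 𝓝[>] (0 : ℝ),
      (rareP P ζ ε i - rareLaplace (P ε) (κ ε) (ζ ε) s i) / rareP P ζ ε i ≤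
        s * δ + (P ε i).real {ω | δ < κ ε 1 ω ∧ ζ ε 1 ω = true} / rareP P ζ ε i := fun δ hδ => by
    filter_upwards [h.isMarkovRenewal] with ε hε
    refine (div_le_div_of_nonneg_right (hε.measureReal_mark_sub_rareLaplace_le hs hδ.le i)
      (rareP_nonneg ε i)).trans ?_
    rw [add_div, mul_div_assoc]
    exact add_le_add
      (mul_le_of_le_one_right (mul_nonneg hs hδ.le) (div_self_le_one (rareP P ζ ε i))) le_rfl
  refine tendsto_order.2 ⟨fun y hy => ?_, fun y hy => ?_⟩
  · filter_upwards [h.isMarkovRenewal] with ε hε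
    exact hy.trans_le (div_nonneg (sub_nonneg.2 (hε.rareLaplace_le hs i)) (rareP_nonneg ε i))
  · have hδ : 0 < y / (s + 1) := by positivity
    have hlt : s * (y / (s + 1)) + 0 < y := by
      rw [add_zero, mul_div_left_comm]
      exact mul_lt_of_lt_one_right hy ((div_lt_one (by positivity)).2 (lt_add_one s))
    filter_upwards [hbound _ hδ,
      ((h.tendsto_sojourn i _ hδ).const_add (s * (y / (s + 1)))).eventually_lt_const hlt]
      with ε hle hε using hle.trans_lt hε

theorem tendsto_avgRare_inv_mul_sum_rareLaplace (h : IsRareEventFamily P η κ ζ Q p π)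
    (hs : 0 ≤ s) : Tendsto
      (fun ε => (avgRare P ζ π ε)⁻¹ * ∑ i, π ε i * rareLaplace (P ε) (κ ε) (ζ ε) s i)
      (𝓝[>] 0) (𝓝 1) := by
  have hweights : ∀ᶠ ε in 𝓝[>] (0 : ℝ), (∀ i, 0 ≤ π ε i * rareP P ζ ε i / avgRare P ζ π ε) ∧
      ∑ i, π ε i * rareP P ζ ε i / avgRare P ζ π ε = 1 := by
    filter_upwards [h.eventually_avgRare_pos, h.stationary] with ε hρ hπ
    refine ⟨fun i => div_nonneg (mul_nonneg (hπ.1 i) (rareP_nonneg ε i)) hρ.le, ?_⟩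
    rw [← Finset.sum_div]
    exact div_self hρ.ne'
  have hratio : ∀ i, Tendsto (fun ε =>
      1 - (rareP P ζ ε i - rareLaplace (P ε) (κ ε) (ζ ε) s i) / rareP P ζ ε i)
      (𝓝[>] 0) (𝓝 1) := fun i => by
    simpa using (h.tendsto_rareP_sub_rareLaplace_div hs i).const_sub 1
  refine (tendsto_sum_mul_of_sum_eq_one hweights hratio).congr' ?_
  filter_upwards [h.isMarkovRenewal] with ε hε
  rw [Finset.mul_sum]
  refine Finset.sum_congr rfl fun i _ => ?_
  rcases (rareP_nonneg (P := P) (ζ := ζ) ε i).eq_or_lt with hzero | hpos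
  · have hrare : rareLaplace (P ε) (κ ε) (ζ ε) s i = 0 :=
      ((hε.rareLaplace_le hs i).trans_eq hzero.symm).antisymm (rareLaplace_nonneg _ _ _ s i)
    simp only [← hzero, hrare, mul_zero, zero_div, zero_mul]
  · field_simp
    ring

theorem tendsto_markLaplace (h : IsRareEventFamily P η κ ζ Q p π) (hs : 0 ≤ s) (hL : 0 ≤ L)
    (hD : Tendsto (fun ε => (avgRare P ζ π ε)⁻¹ * (1 - lapPhi P κ π ε s)) (𝓝[>] 0) (𝓝 L))
    (i : Fin m) : Tendsto (fun ε => markLaplace (P ε) (η ε) (κ ε) (ζ ε) s i) (𝓝[>] 0)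
      (𝓝 (1 / (1 + L))) := by
  have hrare := h.tendsto_avgRare_inv_mul_sum_rareLaplace hs
  refine IsRenewalSystem.tendsto_solution (h.eventually_isRenewalSystem hs) h.stationary
    h.reflTransGen_linked (h.tendsto_rareLaplace hs) hrare ?_ (by positivity) i
  refine (hrare.add hD).congr' ?_
  filter_upwards [h.isMarkovRenewal, h.stationary] with ε hε hπ
  rw [sum_mul_one_sub_sum_survivalLaplace hε hπ.2.1 hs, mul_add]

theorem tendsto_markLaplace_zero (h : IsRareEventFamily P η κ ζ Q p π) (i : Fin m) :
    Tendsto (fun ε => markLaplace (P ε) (η ε) (κ ε) (ζ ε) 0 i) (𝓝[>] 0) (𝓝 1) := by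
  have hD : Tendsto (fun ε => (avgRare P ζ π ε)⁻¹ * (1 - lapPhi P κ π ε 0)) (𝓝[>] 0) (𝓝 0) := by
    refine tendsto_const_nhds.congr' ?_
    filter_upwards [h.isMarkovRenewal, h.stationary] with ε hε hπ
    have := hε.isProbabilityMeasure
    simp only [lapPhi, zero_mul, neg_zero, Real.exp_zero, integral_const, probReal_univ, one_smul,
      mul_one, hπ.2.1, sub_self, mul_zero]
  simpa using h.tendsto_markLaplace le_rfl le_rfl hD i

theorem tendsto_integral_exp_neg_mul_xiRE (h : IsRareEventFamily P η κ ζ Q p π) (hs : 0 ≤ s)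
    (hL : 0 ≤ L)
    (hD : Tendsto (fun ε => (avgRare P ζ π ε)⁻¹ * (1 - lapPhi P κ π ε s)) (𝓝[>] 0) (𝓝 L))
    (i : Fin m) : Tendsto (fun ε => ∫ ω, Real.exp (-(s * xiRE κ ζ ε ω)) ∂P ε i) (𝓝[>] 0)
      (𝓝 (1 / (1 + L))) := by
  have hlim := ((h.tendsto_markLaplace hs hL hD i).const_add 1).sub (h.tendsto_markLaplace_zero i)
  rw [add_sub_cancel_left] at hlim
  exact hlim.congr' (h.isMarkovRenewal.mono fun ε hε => (hε.integral_exp_neg_mul_xiRE hs i).symm)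

end IsRareEventFamily

/-- `Pq` is the mixture of the laws `P i` with the probabilities `q i`, the law of the process with
initial distribution `q`. -/
structure IsMixture {S : Type*} [Fintype S] (P : S → Measure Ω) (q : S → ℝ) (Pq : Measure Ω) :
    Prop where
  nonneg : ∀ i, 0 ≤ q i
  sum_eq_one : ∑ i, q i = 1
  eq_sum : Pq = ∑ i, ENNReal.ofReal (q i) • P i

namespace IsMixture

variable {S : Type*} [Fintype S] {M : S → Measure Ω} {q : S → ℝ} {Pq : Measure Ω}

theorem isProbabilityMeasure (h : IsMixture M q Pq) (hM : ∀ i, IsProbabilityMeasure (M i)) :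
    IsProbabilityMeasure Pq := by
  refine ⟨?_⟩
  simp only [h.eq_sum, Measure.finsetSum_apply, Measure.smul_apply, measure_univ, smul_eq_mul,
    mul_one]
  rw [← ENNReal.ofReal_sum_of_nonneg fun i _ => h.nonneg i, h.sum_eq_one, ENNReal.ofReal_one]

theorem integral_eq (h : IsMixture M q Pq) {f : Ω → ℝ} (hf : ∀ i, Integrable f (M i)) :
    ∫ ω, f ω ∂Pq = ∑ i, q i * ∫ ω, f ω ∂M i := by
  rw [h.eq_sum, integral_finsetSum_measure fun i _ => (hf i).smul_measure ENNReal.ofReal_ne_top]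
  refine Finset.sum_congr rfl fun i _ => ?_
  rw [integral_smul_measure, ENNReal.toReal_ofReal (h.nonneg i), smul_eq_mul]

end IsMixture

theorem IsRareEventFamily.tendsto_integral_exp_neg_mul_xiRE_mixture
    (h : IsRareEventFamily P η κ ζ Q p π) {q : ℝ → Fin m → ℝ} {Pq : ℝ → Measure Ω}
    (hmix : ∀ᶠ ε in 𝓝[>] (0 : ℝ), IsMixture (P ε) (q ε) (Pq ε)) (hs : 0 ≤ s) (hL : 0 ≤ L)
    (hD : Tendsto (fun ε => (avgRare P ζ π ε)⁻¹ * (1 - lapPhi P κ π ε s)) (𝓝[>] 0) (𝓝 L)) :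
    Tendsto (fun ε => ∫ ω, Real.exp (-(s * xiRE κ ζ ε ω)) ∂Pq ε) (𝓝[>] 0)
      (𝓝 (1 / (1 + L))) := by
  refine (tendsto_sum_mul_of_sum_eq_one
    (hmix.mono fun ε hε => ⟨hε.nonneg, hε.sum_eq_one⟩)
    (h.tendsto_integral_exp_neg_mul_xiRE hs hL hD)).congr' ?_
  filter_upwards [hmix, h.isMarkovRenewal] with ε hmixε hε
  have := hε.isProbabilityMeasure
  refine (hmixε.integral_eq fun i => integrable_exp_neg_mul hε.measurable_xiRE.aemeasurable
    (Eventually.of_forall fun ω => xiRE_nonneg fun n => hε.sojourn_nonneg n ω) hs).symm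

theorem IsRareEventFamily.exists_law_laplace_eq (h : IsRareEventFamily P η κ ζ Q p π)
    {q : ℝ → Fin m → ℝ} {Pq : ℝ → Measure Ω} {F : ℝ → ℝ}
    (hmix : ∀ᶠ ε in 𝓝[>] (0 : ℝ), IsMixture (P ε) (q ε) (Pq ε))
    (hlim : ∀ s > 0, Tendsto (fun ε => ∫ ω, Real.exp (-(s * xiRE κ ζ ε ω)) ∂Pq ε) (𝓝[>] 0)
      (𝓝 (F s))) (hF : Tendsto F (𝓝[>] 0) (𝓝 1)) :
    ∃ μ : Measure ℝ, IsProbabilityMeasure μ ∧ μ (Iio 0) = 0 ∧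
      ∀ s > 0, ∫ x, Real.exp (-(s * x)) ∂μ = F s := by
  have hlaw : ∀ᶠ ε in 𝓝[>] (0 : ℝ), IsProbabilityMeasure ((Pq ε).map (xiRE κ ζ ε)) ∧
      0 ≤ᵐ[(Pq ε).map (xiRE κ ζ ε)] id := by
    filter_upwards [hmix, h.isMarkovRenewal] with ε hmixε hε
    have := hmixε.isProbabilityMeasure hε.isProbabilityMeasure
    have hξ := hε.measurable_xiRE.aemeasurable (μ := Pq ε)
    exact ⟨Measure.isProbabilityMeasure_map hξ, (ae_map_iff hξ measurableSet_Ici).2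
      (Eventually.of_forall fun ω => xiRE_nonneg fun n => hε.sojourn_nonneg n ω)⟩
  have htransform : ∀ s > 0,
      Tendsto (fun ε => laplace id ((Pq ε).map (xiRE κ ζ ε)) s) (𝓝[>] 0) (𝓝 (F s)) :=
    fun s hs => (hlim s hs).congr' <| by
      filter_upwards [h.isMarkovRenewal] with ε hε
      rw [laplace_id_map hε.measurable_xiRE.aemeasurable, laplace_eq_integral]
  obtain ⟨μ, hμ, hμ0, hμF⟩ := exists_laplace_eq_of_tendsto
    (hlaw.mono fun _ => And.left) (hlaw.mono fun _ => And.right) htransform hF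
  refine ⟨μ, hμ, ae_nonneg_iff_measure_Iio_eq_zero.1 hμ0, fun s hs => ?_⟩
  rw [← hμF s hs, laplace_eq_integral]
  rfl

end Asymptotics

/-- Theorem 1, sufficiency part: under conditions A, B, C and D₁ the
first-rare-event times `ξ_ε` converge in distribution to a nonnegative random variable
`ξ₀` with Laplace transform `1/(1 + A(s))`. -/
theorem stmt6 {m : ℕ} (hm : 0 < m) (ε₀ : ℝ) (hε₀ : 0 < ε₀)
    {Ω : Type} [MeasurableSpace Ω]
    (η : ℝ → ℕ → Ω → Fin m) (κ : ℝ → ℕ → Ω → ℝ) (ζ : ℝ → ℕ → Ω → Bool)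
    (Pstart : ℝ → Fin m → Measure Ω)
    (hprob : ∀ ε i, IsProbabilityMeasure (Pstart ε i))
    (hmeas : ∀ ε n, Measurable (η ε n) ∧ Measurable (κ ε n) ∧ Measurable (ζ ε n))
    (hκnn : ∀ ε n ω, 0 ≤ κ ε n ω)
    -- Markov renewal structure with kernel Q_{ε,ij}(t, ι)
    (Q : ℝ → Fin m → Fin m → ℝ → Bool → ℝ)
    (hMRP : ∀ ε ∈ Ioc (0:ℝ) ε₀, ∀ n : ℕ, ∀ I : ℕ → Fin m, ∀ T : ℕ → ℝ, ∀ Z : ℕ → Bool,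
      Pstart ε (I 0)
          {ω | ∀ k ≤ n, (η ε k ω = I k ∧ (1 ≤ k → (κ ε k ω ≤ T k ∧ ζ ε k ω = Z k)))}
        = ENNReal.ofReal (∏ k ∈ Finset.Icc 1 n, Q ε (I (k - 1)) (I k) (T k) (Z k)))
    -- embedded Markov chain and condition B
    (p : ℝ → Fin m → Fin m → ℝ)
    (hp : ∀ ε ∈ Ioc (0:ℝ) ε₀, ∀ i j, p ε i j = (Pstart ε i {ω | η ε 1 ω = j}).toReal)
    (hB : CondB p)
    (π : ℝ → Fin m → ℝ)
    (hπ : ∀ᶠ ε in 𝓝[>] (0:ℝ), IsStationaryDist (fun i j => p ε i j) (π ε))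
    -- condition A
    (hA1 : ∀ ε ∈ Ioc (0:ℝ) ε₀, ∃ i, 0 < rareP Pstart ζ ε i)
    (hA2 : ∀ i, Tendsto (fun ε => rareP Pstart ζ ε i) (𝓝[>] (0:ℝ)) (𝓝 0))
    -- condition C
    (hC : ∀ i : Fin m, ∀ δ > 0, Tendsto
      (fun ε => (Pstart ε i {ω | δ < κ ε 1 ω ∧ ζ ε 1 ω = true}).toReal / rareP Pstart ζ ε i)
      (𝓝[>] (0:ℝ)) (𝓝 0))
    -- condition D₁, with v_ε = p_ε⁻¹
    (A : ℝ → ℝ)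
    (hD : ∀ s > 0, Tendsto
      (fun ε => (avgRare Pstart ζ π ε)⁻¹ * (1 - lapPhi Pstart κ π ε s))
      (𝓝[>] (0:ℝ)) (𝓝 (A s)))
    (hApos : ∀ s > 0, 0 < A s)
    (hA0 : Tendsto A (𝓝[>] (0:ℝ)) (𝓝 0))
    -- arbitrary family of initial distributions
    (q : ℝ → Fin m → ℝ) (Pq : ℝ → Measure Ω)
    (hq : ∀ ε ∈ Ioc (0:ℝ) ε₀, (∀ i, 0 ≤ q ε i) ∧ ∑ i, q ε i = 1)
    (hmix : ∀ ε ∈ Ioc (0:ℝ) ε₀, Pq ε = ∑ i, ENNReal.ofReal (q ε i) • Pstart ε i) :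
    ∃ μ : Measure ℝ, IsProbabilityMeasure μ ∧ μ (Iio 0) = 0 ∧
      (∀ s > 0, ∫ x, Real.exp (-(s * x)) ∂μ = 1 / (1 + A s)) ∧
      ∀ s > 0, Tendsto (fun ε => ∫ ω, Real.exp (-(s * xiRE κ ζ ε ω)) ∂(Pq ε))
        (𝓝[>] (0:ℝ)) (𝓝 (1 / (1 + A s))) := by
  have hIoc : ∀ᶠ ε in 𝓝[>] (0 : ℝ), ε ∈ Ioc (0 : ℝ) ε₀ := Ioc_mem_nhdsGT hε₀
  have hMR : ∀ ε ∈ Ioc (0 : ℝ) ε₀,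
      IsMarkovRenewal (Pstart ε) (η ε) (κ ε) (ζ ε) (Q ε) := fun ε hε =>
    ⟨hprob ε, fun n => (hmeas ε n).1, fun n => (hmeas ε n).2.1, fun n => (hmeas ε n).2.2,
      hκnn ε, hMRP ε hε⟩
  have hfamily : IsRareEventFamily Pstart η κ ζ Q p π :=
    ⟨hIoc.mono hMR, hIoc.mono hp, hB, hπ, hIoc.mono hA1, hA2, hC⟩
  have hmixture : ∀ᶠ ε in 𝓝[>] (0 : ℝ), IsMixture (Pstart ε) (q ε) (Pq ε) :=
    hIoc.mono fun ε hε => ⟨(hq ε hε).1, (hq ε hε).2, hmix ε hε⟩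
  have hlim : ∀ s > 0, Tendsto (fun ε => ∫ ω, Real.exp (-(s * xiRE κ ζ ε ω)) ∂(Pq ε))
      (𝓝[>] 0) (𝓝 (1 / (1 + A s))) := fun s hs =>
    hfamily.tendsto_integral_exp_neg_mul_xiRE_mixture hmixture hs.le (hApos s hs).le (hD s hs)
  obtain ⟨μ, hμ, hμ0, hμA⟩ := hfamily.exists_law_laplace_eq hmixture hlim
    (by simpa using (hA0.const_add 1).inv₀ (by norm_num))
  exact ⟨μ, hμ, hμ0, hμA, hlim⟩
end
end
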